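/- For every n ≥ 1 the dual canonical basis elements satisfy B[n,0,0,n−1] = q^{n−1} u₃ B[n−1,0,0,n−1] − q^{2n−1} u₂ B[n−1,0,1,n−2] = q^{3n−3} B[n−1,0,0,n−1] u₃ − q^{2n−3} B[n−1,0,1,n−2] u₂. -/

import Mathlib

noncomputable section

abbrev F : Type := RatFunc ℚ

/-- The deformation parameter `q`. -/
def qq : F := RatFunc.X

/-- The quantum integer `[3] = q² + 1 + q⁻²`. -/
def box3 : F := qq ^ 2 + 1 + (qq⁻¹) ^ 2

/-- The generators `E₁, E₂` of the free algebra. -/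
def gen (i : Fin 2) : FreeAlgebra F (Fin 2) := FreeAlgebra.ι F i

/-- The quantized Serre relations. -/
inductive SerreRel : FreeAlgebra F (Fin 2) → FreeAlgebra F (Fin 2) → Prop
  | rel1 : SerreRel
      (gen 0 ^ 3 * gen 1 - box3 • (gen 0 ^ 2 * gen 1 * gen 0)
        + box3 • (gen 0 * gen 1 * gen 0 ^ 2) - gen 1 * gen 0 ^ 3) 0
  | rel2 : SerreRel
      (gen 1 ^ 3 * gen 0 - box3 • (gen 1 ^ 2 * gen 0 * gen 1)
        + box3 • (gen 1 * gen 0 * gen 1 ^ 2) - gen 0 * gen 1 ^ 3) 0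

/-- `U = U_q(𝔫)`, the free algebra on `E₁, E₂` modulo the quantized Serre relations. -/
abbrev U : Type := RingQuot SerreRel

def E1 : U := RingQuot.mkAlgHom F SerreRel (gen 0)
def E2 : U := RingQuot.mkAlgHom F SerreRel (gen 1)

/-- `A = (1/(q+q⁻¹))(E₂E₁ − q⁻²E₁E₂)`. -/
def Aelt : U := (qq + qq⁻¹)⁻¹ • (E2 * E1 - (qq⁻¹) ^ 2 • (E1 * E2))

def v0 : U := E1
def v1 : U := Aelt * v0 - v0 * Aelt
def v2 : U := Aelt * v1 - v1 * Aelt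
def v3 : U := Aelt * v2 - v2 * Aelt

/-- `uᵢ = (1 − q⁻²)⁻²ⁱ vᵢ`. -/
def u0 : U := v0
def u1 : U := ((1 - (qq⁻¹) ^ 2)⁻¹) ^ 2 • v1
def u2 : U := ((1 - (qq⁻¹) ^ 2)⁻¹) ^ 4 • v2
def u3 : U := ((1 - (qq⁻¹) ^ 2)⁻¹) ^ 6 • v3

/-- `p₁ = u₃u₁ − q²u₂²`. -/
def p1 : U := u3 * u1 - qq ^ 2 • u2 ^ 2
/-- `p₀ = u₂u₀ − q²u₁²`. -/
def p0 : U := u2 * u0 - qq ^ 2 • u1 ^ 2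

/-- `S`, the subalgebra of `U` generated by `u₀, u₁, u₂, u₃`. -/
abbrev Sgen : Subalgebra F U := Algebra.adjoin F ({u0, u1, u2, u3} : Set U)

def us0 : Sgen := ⟨u0, Algebra.subset_adjoin (by simp)⟩
def us1 : Sgen := ⟨u1, Algebra.subset_adjoin (by simp)⟩
def us2 : Sgen := ⟨u2, Algebra.subset_adjoin (by simp)⟩
def us3 : Sgen := ⟨u3, Algebra.subset_adjoin (by simp)⟩

/-- `p₁ = u₃u₁ − q²u₂²` as an element of `S`. -/
def ps1 : Sgen := us3 * us1 - qq ^ 2 • us2 ^ 2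
/-- `p₀ = u₂u₀ − q²u₁²` as an element of `S`. -/
def ps0 : Sgen := us2 * us0 - qq ^ 2 • us1 ^ 2

/-- Index quadruples `a = (a₃, a₂, a₁, a₀)`. -/
abbrev Idx : Type := ℕ × ℕ × ℕ × ℕ

/-- The PBW monomial `u₃^{a₃}u₂^{a₂}u₁^{a₁}u₀^{a₀}`. -/
def mon (a : Idx) : Sgen := us3 ^ a.1 * us2 ^ a.2.1 * us1 ^ a.2.2.1 * us0 ^ a.2.2.2

/-- `b(a) = C(a₃,2)+C(a₂,2)+C(a₁,2)+C(a₀,2)`. -/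
def bexp (a : Idx) : ℕ :=
  Nat.choose a.1 2 + Nat.choose a.2.1 2 + Nat.choose a.2.2.1 2 + Nat.choose a.2.2.2 2

/-- The dual PBW basis element `E[a] = q^{b(a)} u₃^{a₃}u₂^{a₂}u₁^{a₁}u₀^{a₀}`. -/
def Ee (a : Idx) : Sgen := qq ^ bexp a • mon a

/-- `N(a) = (a₃+a₂+a₁+a₀)² − 7a₃ − 5a₂ − 3a₁ − a₀`. -/
def Nnum (a : Idx) : ℤ :=
  ((a.1 : ℤ) + a.2.1 + a.2.2.1 + a.2.2.2) ^ 2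
    - 7 * a.1 - 5 * a.2.1 - 3 * a.2.2.1 - a.2.2.2

/-- `a ⊴ b` iff `b − a ∈ ℕ·(−1,2,−1,0) + ℕ·(0,−1,2,−1)`. -/
def tri (a b : Idx) : Prop :=
  ∃ s r : ℕ,
    (b.1 : ℤ) = a.1 - s ∧
    (b.2.1 : ℤ) = a.2.1 + 2 * s - r ∧
    (b.2.2.1 : ℤ) = a.2.2.1 - s + 2 * r ∧
    (b.2.2.2 : ℤ) = a.2.2.2 - r

/-- `S(a) = {b ∈ ℕ⁴ : a ⊴ b and a ≠ b}`. -/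
def Sset (a : Idx) : Set Idx := {b | tri a b ∧ a ≠ b}

/-- Condition (i): `B[a] − E[a] ∈ Σ_{b ∈ S(a)} qℤ[q]·E[b]`. -/
def cond1 (B : Idx → Sgen) (a : Idx) : Prop :=
  ∃ φ : Idx →₀ Polynomial ℤ,
    (↑φ.support : Set Idx) ⊆ Sset a ∧
    B a - Ee a =
      φ.sum fun b p => (qq * Polynomial.eval₂ (Int.castRingHom F) qq p) • Ee b

/-- Hypotheses on the bar involution of coefficients `bar : q ↦ q⁻¹` and on the
anti-automorphism `σ` of `S`: `σ` is an additive, anti-multiplicative bijection with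
`σ(c(q)·x) = c(q⁻¹)·σ(x)` and `σ(uᵢ) = q^{2i}uᵢ`. -/
def SigmaHyp (bar : F →+* F) (σ : Sgen → Sgen) : Prop :=
  bar qq = qq⁻¹ ∧
  Function.Bijective σ ∧
  (∀ x y : Sgen, σ (x + y) = σ x + σ y) ∧
  (∀ x y : Sgen, σ (x * y) = σ y * σ x) ∧
  (∀ (c : F) (x : Sgen), σ (c • x) = bar c • σ x) ∧
  σ us0 = us0 ∧ σ us1 = qq ^ 2 • us1 ∧ σ us2 = qq ^ 4 • us2 ∧ σ us3 = qq ^ 6 • us3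

/-- The defining properties of the dual canonical basis `B`: for every `a ∈ ℕ⁴`,
`B[a] − E[a] ∈ Σ_{b ∈ S(a)} qℤ[q]·E[b]` and `σ(B[a]) = q^{−N(a)}B[a]`. -/
def DCB (bar : F →+* F) (σ : Sgen → Sgen) (B : Idx → Sgen) : Prop :=
  ∀ a : Idx, cond1 B a ∧ σ (B a) = qq ^ (-Nnum a) • B a

/-- Extension of `B` to integer quadruples by the convention that `B[a] = 0` whenever
some coordinate of `a` is negative. -/
def Bz (B : Idx → Sgen) (a : ℤ × ℤ × ℤ × ℤ) : Sgen :=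
  if 0 ≤ a.1 ∧ 0 ≤ a.2.1 ∧ 0 ≤ a.2.2.1 ∧ 0 ≤ a.2.2.2 then
    B (a.1.toNat, a.2.1.toNat, a.2.2.1.toNat, a.2.2.2.toNat)
  else 0

section Abs
set_option linter.unusedSimpArgs false
set_option linter.unreachableTactic false
set_option linter.unusedTactic false
set_option linter.unnecessarySeqFocus false
variable {K R : Type*} [Field K] [Ring R] [Algebra K R]

structure QRel (d : K) (u0 u1 u2 u3 : R) : Prop where
  h01 : u0 * u1 = d⁻¹ • (u1 * u0)
  h12 : u1 * u2 = d⁻¹ • (u2 * u1)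
  h23 : u2 * u3 = d⁻¹ • (u3 * u2)
  h02 : u0 * u2 = d⁻¹ • (u2 * u0) + (d⁻¹ - 1) • (u1 * u1)
  h13 : u1 * u3 = d⁻¹ • (u3 * u1) + (d⁻¹ - 1) • (u2 * u2)
  h03 : u0 * u3 = d⁻¹ • (u3 * u0) + (d⁻¹ * d⁻¹ - 1) • (u2 * u1)

def cc (g : K) (z P : R) : ℕ → R
  | 0 => 0
  | 1 => 1
  | (n+2) => z * cc g z P (n+1) - g • (P * cc g z P n)

theorem assoc_ext {a b c : R} (h : a * b = c) (y : R) : a * (b * y) = c * y := by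
  rw [← mul_assoc, h]

theorem cc_comm_of (g : K) {z P w : R} (h1 : w * z = z * w) (h2 : w * P = P * w) (n : ℕ) :
    w * cc g z P n = cc g z P n * w := by
  induction n using Nat.twoStepInduction with
  | zero => simp [cc]
  | one => simp [cc]
  | more n ih1 ih2 =>
    simp only [cc, mul_sub, sub_mul, mul_smul_comm, smul_mul_assoc]
    rw [← mul_assoc, h1, mul_assoc, ih2, ← mul_assoc w, h2, mul_assoc P, ih1]
    simp only [mul_assoc]

theorem cc_succ' (g : K) {z P : R} (h : z * P = P * z) (n : ℕ) :
    cc g z P (n+2) = cc g z P (n+1) * z - g • (cc g z P n * P) := by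
  rw [cc, cc_comm_of g rfl h, cc_comm_of g h.symm rfl]

theorem cc_scal (g k : K) {z P w : R} (h1 : w * z = k • (z * w)) (h2 : w * P = (k*k) • (P * w)) (n : ℕ) :
    w * cc g z P (n+1) = k^n • (cc g z P (n+1) * w) := by
  induction n using Nat.twoStepInduction with
  | zero => simp [cc]
  | one => simp [cc, h1]
  | more n ih1 ih2 =>
    rw [cc]
    simp only [mul_sub, sub_mul, mul_smul_comm, smul_mul_assoc]
    rw [← mul_assoc, h1, smul_mul_assoc, mul_assoc z w, ih2, ← mul_assoc w, h2, smul_mul_assoc, mul_assoc P w, ih1]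
    simp only [mul_assoc, mul_smul_comm, smul_smul]
    module

/-- commutation lemma -/
theorem key (D g : K) (hD : D ≠ 0) {z P a e : R} (hzP : z * P = P * z)
    (h1 : D • (z * a) - a * z = (1 - D) • e)
    (h2 : D • (z * (a * z - D • e)) - (a * z - D • e) * z = (g * (D⁻¹ - 1)) • (a * P))
    (haP : a * P = D ^ 3 • (P * a)) (heP : e * P = D ^ 3 • (P * e)) (m : ℕ) :
    a * cc g z P (m+1) - D • (e * cc g z P m)
      = D ^ m • (cc g z P (m+1) * a - D⁻¹ • (cc g z P m * e)) := by
  set c := cc g z P with hc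
  have c2 : ∀ n, c (n+2) = z * c (n+1) - g • (P * c n) := fun n => rfl
  have c2' : ∀ n, c (n+2) = c (n+1) * z - g • (c n * P) := fun n => cc_succ' g hzP n
  have cP : ∀ n, P * c n = c n * P := fun n => cc_comm_of g hzP.symm rfl n
  obtain ⟨X, hX⟩ : ∃ X : ℕ → R, X = fun m => a * c (m+1) - D • (e * c m) := ⟨_, rfl⟩
  obtain ⟨Y, hY⟩ : ∃ Y : ℕ → R, Y = fun m => c (m+1) * a - D⁻¹ • (c m * e) := ⟨_, rfl⟩
  have X0 : X 0 = a := by simp [hX, hc, cc]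
  have X1 : X 1 = a * z - D • e := by simp [hX, hc, cc]
  have Y0 : Y 0 = a := by simp [hY, hc, cc]
  have Y1 : Y 1 = z * a - D⁻¹ • e := by simp [hY, hc, cc]
  have X2 : ∀ m, X (m+2) = X (m+1) * z - g • (X m * P) := by
    intro m
    simp only [hX]
    rw [c2' (m+1), c2' m]
    simp only [mul_sub, sub_mul, mul_smul_comm, smul_mul_assoc, mul_assoc]
    module
  have Y2 : ∀ m, Y (m+2) = z * Y (m+1) - g • (P * Y m) := by
    intro m
    simp only [hY]
    rw [c2 (m+1), c2 m]
    simp only [mul_sub, sub_mul, mul_smul_comm, smul_mul_assoc, mul_assoc]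
    module
  have XP : ∀ m, X m * P = D ^ 3 • (P * X m) := by
    intro m
    simp only [hX, mul_sub, sub_mul, mul_smul_comm, smul_mul_assoc, mul_assoc]
    rw [← cP, ← cP, ← mul_assoc, ← mul_assoc, haP, heP]
    simp only [mul_sub, sub_mul, mul_smul_comm, smul_mul_assoc, mul_assoc]
    module
  have step : ∀ m, ∀ w1 w2 : R, D • (z * X (m+1)) - X (m+1) * z = (g * (D⁻¹ - 1)) • w1 →
     D • (z * X m) - X m * z = (g * (D⁻¹ - 1)) • w2 →
     D • (z * X (m+2)) - X (m+2) * z = (g * (D⁻¹ - 1)) • (w1 * z - g • (w2 * P)) := by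
    intro m w1 w2 e1 e2
    have : D • (z * X (m+2)) - X (m+2) * z = (D • (z * X (m+1)) - X (m+1) * z) * z
        - g • ((D • (z * X m) - X m * z) * P) := by
      rw [X2]
      simp only [mul_sub, sub_mul, mul_smul_comm, smul_mul_assoc, mul_assoc, ← hzP]
      module
    rw [this, e1, e2]
    simp only [mul_sub, sub_mul, mul_smul_comm, smul_mul_assoc, mul_assoc]
    module
  have Rm : ∀ m, D • (z * X (m+1)) - X (m+1) * z = (g * (D⁻¹ - 1)) • (X m * P) := by
    intro m
    induction m using Nat.twoStepInduction with
    | zero => rw [X0, X1]; exact h2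
    | one =>
      have : D • (z * X (0+2)) - X (0+2) * z = (D • (z * X (0+1)) - X (0+1) * z) * z
        - g • ((D • (z * X 0) - X 0 * z) * P) := by
        rw [X2]
        simp only [mul_sub, sub_mul, mul_smul_comm, smul_mul_assoc, mul_assoc, ← hzP]
        module
      rw [show 1 + 1 = 0 + 2 from rfl, this, zero_add, X1, h2, X0, h1]
      simp only [mul_sub, sub_mul, mul_smul_comm, smul_mul_assoc, mul_assoc, ← hzP]
      match_scalars <;> field_simp <;> ring
    | more n ih1 ih2 =>
      rw [step (n+1) _ _ ih2 ih1, X2]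
      simp only [mul_sub, sub_mul, mul_smul_comm, smul_mul_assoc, mul_assoc, ← hzP]
  have main : ∀ m, X m = D ^ m • Y m := by
    intro m
    induction m using Nat.twoStepInduction with
    | zero => simp [X0, Y0]
    | one =>
      rw [X1, Y1]
      have : a * z = D • (z * a) - (1 - D) • e := by rw [← h1]; abel
      rw [this]
      match_scalars <;> field_simp <;> ring
    | more n ih1 ih2 =>
      have e1 : X (n+1) * z = D • (z * X (n+1)) - (g * (D⁻¹ - 1)) • (X n * P) := by
        rw [← Rm]; abel
      rw [X2, e1, Y2, XP, ih2, ih1]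
      simp only [mul_smul_comm]
      match_scalars <;> field_simp <;> ring
  have := main m
  simpa only [hX, hY] using this

namespace QRel
variable {d : K} {u0 u1 u2 u3 : R}

section
theorem p1u3 (H : QRel d u0 u1 u2 u3) (hd : d ≠ 0) :
    (u3 * u1 - d • u2 ^ 2) * u3 = d⁻¹ • (u3 * (u3 * u1 - d • u2 ^ 2)) := by
  simp only [pow_two, mul_sub, sub_mul, mul_add, add_mul, smul_mul_assoc, mul_smul_comm, smul_sub, smul_add, smul_smul, mul_assoc, H.h01, H.h12, H.h23,
    H.h02, H.h13, H.h03, assoc_ext H.h01, assoc_ext H.h12, assoc_ext H.h23, assoc_ext H.h02, assoc_ext H.h13, assoc_ext H.h03]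
  match_scalars <;> field_simp <;> ring

theorem p1u2 (H : QRel d u0 u1 u2 u3) (hd : d ≠ 0) :
    (u3 * u1 - d • u2 ^ 2) * u2 = (1:K) • (u2 * (u3 * u1 - d • u2 ^ 2)) := by
  simp only [pow_two, mul_sub, sub_mul, mul_add, add_mul, smul_mul_assoc, mul_smul_comm, smul_sub, smul_add, smul_smul, mul_assoc, H.h01, H.h12, H.h23,
    H.h02, H.h13, H.h03, assoc_ext H.h01, assoc_ext H.h12, assoc_ext H.h23, assoc_ext H.h02, assoc_ext H.h13, assoc_ext H.h03]
  match_scalars <;> field_simp <;> ring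

theorem p1u1 (H : QRel d u0 u1 u2 u3) (hd : d ≠ 0) :
    (u3 * u1 - d • u2 ^ 2) * u1 = d • (u1 * (u3 * u1 - d • u2 ^ 2)) := by
  simp only [pow_two, mul_sub, sub_mul, mul_add, add_mul, smul_mul_assoc, mul_smul_comm, smul_sub, smul_add, smul_smul, mul_assoc, H.h01, H.h12, H.h23,
    H.h02, H.h13, H.h03, assoc_ext H.h01, assoc_ext H.h12, assoc_ext H.h23, assoc_ext H.h02, assoc_ext H.h13, assoc_ext H.h03]
  match_scalars <;> field_simp <;> ring

theorem p1u0 (H : QRel d u0 u1 u2 u3) (hd : d ≠ 0) :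
    (u3 * u1 - d • u2 ^ 2) * u0 = (d*d) • (u0 * (u3 * u1 - d • u2 ^ 2)) := by
  simp only [pow_two, mul_sub, sub_mul, mul_add, add_mul, smul_mul_assoc, mul_smul_comm, smul_sub, smul_add, smul_smul, mul_assoc, H.h01, H.h12, H.h23,
    H.h02, H.h13, H.h03, assoc_ext H.h01, assoc_ext H.h12, assoc_ext H.h23, assoc_ext H.h02, assoc_ext H.h13, assoc_ext H.h03]
  match_scalars <;> field_simp <;> ring

theorem p0u0 (H : QRel d u0 u1 u2 u3) (hd : d ≠ 0) :
    (u2 * u0 - d • u1 ^ 2) * u0 = d • (u0 * (u2 * u0 - d • u1 ^ 2)) := by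
  simp only [pow_two, mul_sub, sub_mul, mul_add, add_mul, smul_mul_assoc, mul_smul_comm, smul_sub, smul_add, smul_smul, mul_assoc, H.h01, H.h12, H.h23,
    H.h02, H.h13, H.h03, assoc_ext H.h01, assoc_ext H.h12, assoc_ext H.h23, assoc_ext H.h02, assoc_ext H.h13, assoc_ext H.h03]
  match_scalars <;> field_simp <;> ring

theorem p0u1 (H : QRel d u0 u1 u2 u3) (hd : d ≠ 0) :
    (u2 * u0 - d • u1 ^ 2) * u1 = (1:K) • (u1 * (u2 * u0 - d • u1 ^ 2)) := by
  simp only [pow_two, mul_sub, sub_mul, mul_add, add_mul, smul_mul_assoc, mul_smul_comm, smul_sub, smul_add, smul_smul, mul_assoc, H.h01, H.h12, H.h23,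
    H.h02, H.h13, H.h03, assoc_ext H.h01, assoc_ext H.h12, assoc_ext H.h23, assoc_ext H.h02, assoc_ext H.h13, assoc_ext H.h03]
  match_scalars <;> field_simp <;> ring

theorem p0u2 (H : QRel d u0 u1 u2 u3) (hd : d ≠ 0) :
    (u2 * u0 - d • u1 ^ 2) * u2 = d⁻¹ • (u2 * (u2 * u0 - d • u1 ^ 2)) := by
  simp only [pow_two, mul_sub, sub_mul, mul_add, add_mul, smul_mul_assoc, mul_smul_comm, smul_sub, smul_add, smul_smul, mul_assoc, H.h01, H.h12, H.h23,
    H.h02, H.h13, H.h03, assoc_ext H.h01, assoc_ext H.h12, assoc_ext H.h23, assoc_ext H.h02, assoc_ext H.h13, assoc_ext H.h03]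
  match_scalars <;> field_simp <;> ring

theorem p0u3 (H : QRel d u0 u1 u2 u3) (hd : d ≠ 0) :
    (u2 * u0 - d • u1 ^ 2) * u3 = (d⁻¹*d⁻¹) • (u3 * (u2 * u0 - d • u1 ^ 2)) := by
  simp only [pow_two, mul_sub, sub_mul, mul_add, add_mul, smul_mul_assoc, mul_smul_comm, smul_sub, smul_add, smul_smul, mul_assoc, H.h01, H.h12, H.h23,
    H.h02, H.h13, H.h03, assoc_ext H.h01, assoc_ext H.h12, assoc_ext H.h23, assoc_ext H.h02, assoc_ext H.h13, assoc_ext H.h03]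
  match_scalars <;> field_simp <;> ring

theorem p1z (H : QRel d u0 u1 u2 u3) (hd : d ≠ 0) :
    (u3 * u1 - d • u2 ^ 2) * (u3 * u0 - d • (u2 * u1)) = d • ((u3 * u0 - d • (u2 * u1)) * (u3 * u1 - d • u2 ^ 2)) := by
  simp only [pow_two, mul_sub, sub_mul, mul_add, add_mul, smul_mul_assoc, mul_smul_comm, smul_sub, smul_add, smul_smul, mul_assoc, H.h01, H.h12, H.h23,
    H.h02, H.h13, H.h03, assoc_ext H.h01, assoc_ext H.h12, assoc_ext H.h23, assoc_ext H.h02, assoc_ext H.h13, assoc_ext H.h03]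
  match_scalars <;> field_simp <;> ring

theorem p0z (H : QRel d u0 u1 u2 u3) (hd : d ≠ 0) :
    (u2 * u0 - d • u1 ^ 2) * (u3 * u0 - d • (u2 * u1)) = d⁻¹ • ((u3 * u0 - d • (u2 * u1)) * (u2 * u0 - d • u1 ^ 2)) := by
  simp only [pow_two, mul_sub, sub_mul, mul_add, add_mul, smul_mul_assoc, mul_smul_comm, smul_sub, smul_add, smul_smul, mul_assoc, H.h01, H.h12, H.h23,
    H.h02, H.h13, H.h03, assoc_ext H.h01, assoc_ext H.h12, assoc_ext H.h23, assoc_ext H.h02, assoc_ext H.h13, assoc_ext H.h03]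
  match_scalars <;> field_simp <;> ring

theorem p1p0 (H : QRel d u0 u1 u2 u3) (hd : d ≠ 0) :
    (u3 * u1 - d • u2 ^ 2) * (u2 * u0 - d • u1 ^ 2) = (d*d) • ((u2 * u0 - d • u1 ^ 2) * (u3 * u1 - d • u2 ^ 2)) := by
  simp only [pow_two, mul_sub, sub_mul, mul_add, add_mul, smul_mul_assoc, mul_smul_comm, smul_sub, smul_add, smul_smul, mul_assoc, H.h01, H.h12, H.h23,
    H.h02, H.h13, H.h03, assoc_ext H.h01, assoc_ext H.h12, assoc_ext H.h23, assoc_ext H.h02, assoc_ext H.h13, assoc_ext H.h03]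
  match_scalars <;> field_simp <;> ring

theorem zu3 (H : QRel d u0 u1 u2 u3) (hd : d ≠ 0) :
    (u3 * u0 - d • (u2 * u1)) * u3 = d⁻¹ • (u3 * (u3 * u0 - d • (u2 * u1))) + (d⁻¹ - 1) • (u2 * (u3 * u1 - d • u2 ^ 2)) := by
  simp only [pow_two, mul_sub, sub_mul, mul_add, add_mul, smul_mul_assoc, mul_smul_comm, smul_sub, smul_add, smul_smul, mul_assoc, H.h01, H.h12, H.h23,
    H.h02, H.h13, H.h03, assoc_ext H.h01, assoc_ext H.h12, assoc_ext H.h23, assoc_ext H.h02, assoc_ext H.h13, assoc_ext H.h03]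
  match_scalars <;> field_simp <;> ring

theorem u0z (H : QRel d u0 u1 u2 u3) (hd : d ≠ 0) :
    u0 * (u3 * u0 - d • (u2 * u1)) = d⁻¹ • ((u3 * u0 - d • (u2 * u1)) * u0) + (d⁻¹ - 1) • ((u2 * u0 - d • u1 ^ 2) * u1) := by
  simp only [pow_two, mul_sub, sub_mul, mul_add, add_mul, smul_mul_assoc, mul_smul_comm, smul_sub, smul_add, smul_smul, mul_assoc, H.h01, H.h12, H.h23,
    H.h02, H.h13, H.h03, assoc_ext H.h01, assoc_ext H.h12, assoc_ext H.h23, assoc_ext H.h02, assoc_ext H.h13, assoc_ext H.h03]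
  match_scalars <;> field_simp <;> ring

theorem zu2 (H : QRel d u0 u1 u2 u3) (hd : d ≠ 0) :
    (u3 * u0 - d • (u2 * u1)) * u2 = u2 * (u3 * u0 - d • (u2 * u1)) + (d⁻¹ - 1) • ((u3 * u1 - d • u2 ^ 2) * u1) := by
  simp only [pow_two, mul_sub, sub_mul, mul_add, add_mul, smul_mul_assoc, mul_smul_comm, smul_sub, smul_add, smul_smul, mul_assoc, H.h01, H.h12, H.h23,
    H.h02, H.h13, H.h03, assoc_ext H.h01, assoc_ext H.h12, assoc_ext H.h23, assoc_ext H.h02, assoc_ext H.h13, assoc_ext H.h03]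
  match_scalars <;> field_simp <;> ring

theorem u1z (H : QRel d u0 u1 u2 u3) (hd : d ≠ 0) :
    u1 * (u3 * u0 - d • (u2 * u1)) = (u3 * u0 - d • (u2 * u1)) * u1 + (d⁻¹ - 1) • (u2 * (u2 * u0 - d • u1 ^ 2)) := by
  simp only [pow_two, mul_sub, sub_mul, mul_add, add_mul, smul_mul_assoc, mul_smul_comm, smul_sub, smul_add, smul_smul, mul_assoc, H.h01, H.h12, H.h23,
    H.h02, H.h13, H.h03, assoc_ext H.h01, assoc_ext H.h12, assoc_ext H.h23, assoc_ext H.h02, assoc_ext H.h13, assoc_ext H.h03]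
  match_scalars <;> field_simp <;> ring

theorem u2z (H : QRel d u0 u1 u2 u3) (hd : d ≠ 0) :
    u2 * (u3 * u0 - d • (u2 * u1)) = (u3 * u1 - d • u2 ^ 2) * u1 + d⁻¹ • (u3 * (u2 * u0 - d • u1 ^ 2)) := by
  simp only [pow_two, mul_sub, sub_mul, mul_add, add_mul, smul_mul_assoc, mul_smul_comm, smul_sub, smul_add, smul_smul, mul_assoc, H.h01, H.h12, H.h23,
    H.h02, H.h13, H.h03, assoc_ext H.h01, assoc_ext H.h12, assoc_ext H.h23, assoc_ext H.h02, assoc_ext H.h13, assoc_ext H.h03]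
  match_scalars <;> field_simp <;> ring

theorem zu1 (H : QRel d u0 u1 u2 u3) (hd : d ≠ 0) :
    (u3 * u0 - d • (u2 * u1)) * u1 = u2 * (u2 * u0 - d • u1 ^ 2) + d⁻¹ • ((u3 * u1 - d • u2 ^ 2) * u0) := by
  simp only [pow_two, mul_sub, sub_mul, mul_add, add_mul, smul_mul_assoc, mul_smul_comm, smul_sub, smul_add, smul_smul, mul_assoc, H.h01, H.h12, H.h23,
    H.h02, H.h13, H.h03, assoc_ext H.h01, assoc_ext H.h12, assoc_ext H.h23, assoc_ext H.h02, assoc_ext H.h13, assoc_ext H.h03]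
  match_scalars <;> field_simp <;> ring

theorem big (H : QRel d u0 u1 u2 u3) (hd : d ≠ 0) :
    d • (u2 * u1 * (u3 * u0 - d • (u2 * u1))) + d • ((u2 * u0 - d • u1 ^ 2) * (u3 * u1 - d • u2 ^ 2)) = d⁻¹ • (u3 * ((u2 * u0 - d • u1 ^ 2) * u1)) + u2 * (u3 * u1 - d • u2 ^ 2) * u0 := by
  simp only [pow_two, mul_sub, sub_mul, mul_add, add_mul, smul_mul_assoc, mul_smul_comm, smul_sub, smul_add, smul_smul, mul_assoc, H.h01, H.h12, H.h23,
    H.h02, H.h13, H.h03, assoc_ext H.h01, assoc_ext H.h12, assoc_ext H.h23, assoc_ext H.h02, assoc_ext H.h13, assoc_ext H.h03]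
  match_scalars <;> field_simp <;> ring

end
end QRel

section Sys
variable {d : K} {u0 u1 u2 u3 : R} {p1 p0 z : R}

theorem qr_zP (H : QRel d u0 u1 u2 u3) (hd : d ≠ 0)
    (hp1 : p1 = u3 * u1 - d • u2 ^ 2) (hp0 : p0 = u2 * u0 - d • u1 ^ 2)
    (hz : z = u3 * u0 - d • (u2 * u1)) : z * (p0 * p1) = p0 * p1 * z := by
  have a1 := H.p1z hd
  have a2 := H.p0z hd
  rw [← hp1, ← hz] at a1
  rw [← hp0, ← hz] at a2
  rw [mul_assoc, a1, mul_smul_comm, ← mul_assoc, ← mul_assoc p0 z, a2, smul_mul_assoc, smul_smul,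
    mul_inv_cancel₀ hd, one_smul]

theorem keyA (H : QRel d u0 u1 u2 u3) (hd : d ≠ 0)
    (hp1 : p1 = u3 * u1 - d • u2 ^ 2) (hp0 : p0 = u2 * u0 - d • u1 ^ 2)
    (hz : z = u3 * u0 - d • (u2 * u1)) (m : ℕ) :
    u3 * cc d z (p0 * p1) (m+1) - d • (u2 * p1 * cc d z (p0 * p1) m)
      = d ^ m • (cc d z (p0 * p1) (m+1) * u3 - d⁻¹ • (cc d z (p0 * p1) m * (u2 * p1))) := by
  have hzP := qr_zP H hd hp1 hp0 hz
  have a1 := H.p1z hd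
  have a3 := H.p1u3 hd
  have a4 := H.p0u3 hd
  have a5 := H.p1u2 hd
  have a6 := H.p0u2 hd
  have a7 := H.p1p0 hd
  have a8 := H.zu3 hd
  have a9 := H.zu2 hd
  have a10 := H.u2z hd
  simp only [← hp1, ← hp0, ← hz] at a1 a3 a4 a5 a6 a7 a8 a9 a10
  rw [one_smul] at a5
  have h1 : d • (z * u3) - u3 * z = (1 - d) • (u2 * p1) := by
    rw [a8]; match_scalars <;> field_simp <;> ring
  refine key d d hd hzP h1 ?_ ?_ ?_ m
  · have e1 : d • (z * (u3 * z - d • (u2 * p1))) - (u3 * z - d • (u2 * p1)) * z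
       = (d • (z * u3) - u3 * z) * z - d • (d • (z * (u2 * p1)) - (u2 * p1) * z) := by
      simp only [mul_sub, sub_mul, smul_mul_assoc, mul_smul_comm, mul_assoc]
      module
    rw [e1, h1]
    have e2 : u2 * p1 * z = d • ((p1 * u1 + d⁻¹ • (u3 * p0)) * p1) := by
      rw [mul_assoc, a1, mul_smul_comm, ← mul_assoc, a10]
    have e3 : z * (u2 * p1) = (p1 * u1 + d⁻¹ • (u3 * p0)) * p1 + (d⁻¹ - 1) • (p1 * u1 * p1) := by
      rw [← mul_assoc, a9, a10, add_mul, smul_mul_assoc]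
    rw [smul_mul_assoc, e2, e3]
    simp only [add_mul, smul_mul_assoc, mul_assoc]
    match_scalars <;> field_simp <;> ring
  · rw [mul_assoc p0, a3, mul_smul_comm, ← mul_assoc, ← mul_assoc, a4]
    simp only [smul_mul_assoc, mul_assoc]
    match_scalars; field_simp
  · have : p0 * p1 * (u2 * p1) = (d⁻¹ * d⁻¹ * d⁻¹) • (u2 * p1 * (p0 * p1)) := by
      rw [mul_assoc u2, ← mul_assoc p1 p0, a7, mul_assoc p0, ← mul_assoc p1 u2, a5]
      simp only [smul_mul_assoc, mul_smul_comm, ← mul_assoc]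
      rw [a6]
      simp only [smul_mul_assoc, mul_smul_comm, ← mul_assoc]
      match_scalars; field_simp
    rw [this]
    match_scalars; field_simp

theorem keyA' (H : QRel d u0 u1 u2 u3) (hd : d ≠ 0)
    (hp1 : p1 = u3 * u1 - d • u2 ^ 2) (hp0 : p0 = u2 * u0 - d • u1 ^ 2)
    (hz : z = u3 * u0 - d • (u2 * u1)) (m : ℕ) :
    cc d z (p0 * p1) (m+1) * u0 - d • (cc d z (p0 * p1) m * (p0 * u1))
      = d ^ m • (u0 * cc d z (p0 * p1) (m+1) - d⁻¹ • (p0 * u1 * cc d z (p0 * p1) m)) := by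
  have hzP := qr_zP H hd hp1 hp0 hz
  have a1 := H.p0z hd
  have a3 := H.p1u0 hd
  have a4 := H.p0u0 hd
  have a5 := H.p1u1 hd
  have a6 := H.p0u1 hd
  have a7 := H.p1p0 hd
  have a8 := H.u0z hd
  have a9 := H.u1z hd
  have a10 := H.zu1 hd
  simp only [← hp1, ← hp0, ← hz] at a1 a3 a4 a5 a6 a7 a8 a9 a10
  rw [one_smul] at a6
  have hPu : p0 * p1 * u0 = (d * d * d) • (u0 * (p0 * p1)) := by
    rw [mul_assoc p0, a3, mul_smul_comm, ← mul_assoc, ← mul_assoc, a4]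
    simp only [smul_mul_assoc, mul_assoc]
    match_scalars; field_simp
  have h1 : d⁻¹ • (z * u0) - u0 * z = (1 - d⁻¹) • (p0 * u1) := by
    rw [a8]; match_scalars <;> field_simp <;> ring
  have := key d⁻¹ d (inv_ne_zero hd) hzP h1 ?_ ?_ ?_ m
  · rw [inv_inv] at this
    rw [this, smul_smul, ← mul_pow, mul_inv_cancel₀ hd, one_pow, one_smul]
  · have e1 : d⁻¹ • (z * (u0 * z - d⁻¹ • (p0 * u1))) - (u0 * z - d⁻¹ • (p0 * u1)) * z
       = (d⁻¹ • (z * u0) - u0 * z) * z - d⁻¹ • (d⁻¹ • (z * (p0 * u1)) - (p0 * u1) * z) := by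
      simp only [mul_sub, sub_mul, smul_mul_assoc, mul_smul_comm, mul_assoc]
      module
    rw [e1, h1]
    have b1 : z * p0 = d • (p0 * z) := by rw [a1]; match_scalars; field_simp
    have e2 : p0 * u1 * z = p0 * (u2 * p0 + d⁻¹ • (p1 * u0)) + (d⁻¹ - 1) • (p0 * (u2 * p0)) := by
      rw [mul_assoc, a9, a10, mul_add, mul_smul_comm]
    have e3 : z * (p0 * u1) = d • (p0 * (u2 * p0 + d⁻¹ • (p1 * u0))) := by
      rw [← mul_assoc, b1, smul_mul_assoc, mul_assoc, a10]
    have e4 : u0 * (p0 * p1) = (d⁻¹ * d⁻¹ * d⁻¹) • (p0 * (p1 * u0)) := by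
      rw [← mul_assoc p0, hPu]; match_scalars; field_simp
    rw [smul_mul_assoc, e2, e3, e4]
    simp only [mul_add, mul_smul_comm]
    match_scalars <;> field_simp <;> ring
  · rw [hPu]
    match_scalars; field_simp
  · have : p0 * p1 * (p0 * u1) = (d * d * d) • (p0 * u1 * (p0 * p1)) := by
      rw [a6, ← mul_assoc (p0 * p1), mul_assoc p0, a5, mul_smul_comm, ← mul_assoc p0 u1, a6,
        smul_mul_assoc, mul_assoc _ p1 p0, a7]
      simp only [smul_mul_assoc, mul_smul_comm, mul_assoc]
      match_scalars; field_simp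
    rw [this]
    match_scalars; field_simp

theorem keyC (H : QRel d u0 u1 u2 u3) (hd : d ≠ 0)
    (hp1 : p1 = u3 * u1 - d • u2 ^ 2) (hp0 : p0 = u2 * u0 - d • u1 ^ 2)
    (hz : z = u3 * u0 - d • (u2 * u1)) (m : ℕ) :
    (u3 * cc d z (p0 * p1) (m+2) - d • (u2 * p1 * cc d z (p0 * p1) (m+1))) * u0
     - d • ((u3 * cc d z (p0 * p1) (m+1) - d • (u2 * p1 * cc d z (p0 * p1) m)) * (p0 * u1))
      = d ^ (m+1) • cc d z (p0 * p1) (m+3) := by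
  have k1 := keyA' H hd hp1 hp0 hz m
  have k2 := keyA' H hd hp1 hp0 hz (m+1)
  have a5 := H.p1u1 hd
  have a6 := H.p0u1 hd
  have a7 := H.p1p0 hd
  have big := H.big hd
  simp only [← hp1, ← hp0, ← hz] at a5 a6 a7 big
  rw [one_smul] at a6
  have r3 : cc d z (p0 * p1) (m+3) = z * cc d z (p0 * p1) (m+2) - d • (p0 * p1 * cc d z (p0 * p1) (m+1)) := rfl
  have r2 : cc d z (p0 * p1) (m+2) = z * cc d z (p0 * p1) (m+1) - d • (p0 * p1 * cc d z (p0 * p1) m) := rfl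
  rw [show m + 1 + 1 = m + 2 from rfl] at k2
  generalize cc d z (p0 * p1) (m+3) = c3 at *
  generalize cc d z (p0 * p1) (m+2) = c2 at *
  generalize cc d z (p0 * p1) (m+1) = c1 at *
  generalize cc d z (p0 * p1) m = c0 at *
  have s1 : (u3 * c2 - d • (u2 * p1 * c1)) * u0 - d • ((u3 * c1 - d • (u2 * p1 * c0)) * (p0 * u1))
      = u3 * (c2 * u0 - d • (c1 * (p0 * u1))) - d • (u2 * p1 * (c1 * u0 - d • (c0 * (p0 * u1)))) := by
    simp only [mul_sub, sub_mul, smul_mul_assoc, mul_smul_comm, mul_assoc]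
    module
  have s2 : u2 * p1 * (p0 * u1 * c0) = (d * d * d) • (u2 * u1 * (p0 * p1 * c0)) := by
    have : p1 * (p0 * u1) = (d * d * d) • (u1 * (p0 * p1)) := by
      rw [a6, ← mul_assoc, a5, smul_mul_assoc, mul_assoc, a7]
      simp only [mul_smul_comm]
      module
    rw [← mul_assoc, mul_assoc u2, this]
    simp only [smul_mul_assoc, mul_smul_comm, mul_assoc]
  have s3 : u2 * u1 * c2 = u2 * u1 * z * c1 - d • (u2 * u1 * (p0 * p1 * c0)) := by
    rw [r2]
    simp only [mul_sub, mul_smul_comm, mul_assoc]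
  have s4 : u2 * p1 * (u0 * c1) = d • (u2 * u1 * z * c1) + d • (p0 * p1 * c1)
      - d⁻¹ • (u3 * (p0 * u1 * c1)) := by
    have := congrArg (· * c1) big
    simp only [add_mul, smul_mul_assoc] at this
    rw [this]
    simp only [mul_assoc]
    module
  have s5 : z * c2 = u3 * (u0 * c2) - d • (u2 * u1 * c2) := by
    rw [hz]
    simp only [sub_mul, smul_mul_assoc, mul_assoc]
  rw [s1, k1, k2, r3, s5, s3]
  simp only [mul_sub, mul_smul_comm]
  rw [s2, s4]
  match_scalars <;> field_simp <;> ring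

end Sys

section Mon
variable {d : K} {u0 u1 u2 u3 : R} {p1 p0 : R}

theorem comm_pow_r {k : K} {x y : R} (h : x * y = k • (y * x)) (n : ℕ) :
    x * y ^ n = k ^ n • (y ^ n * x) := by
  induction n with
  | zero => simp
  | succ n ih =>
    rw [pow_succ, ← mul_assoc, ih, smul_mul_assoc, mul_assoc, h, mul_smul_comm, smul_smul, mul_assoc, pow_succ]

theorem comm_pow_l {k : K} {x y : R} (h : x * y = k • (y * x)) (n : ℕ) :
    x ^ n * y = k ^ n • (y * x ^ n) := by
  induction n with
  | zero => simp
  | succ n ih =>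
    rw [pow_succ, mul_assoc, h, mul_smul_comm, ← mul_assoc, ih, smul_mul_assoc, smul_smul, mul_assoc,
      pow_succ, mul_comm]

theorem mulu2 (H : QRel d u0 u1 u2 u3) (b3 b2 b1 b0 : ℕ) :
    u2 * (u3 ^ b3 * u2 ^ b2 * u1 ^ b1 * u0 ^ b0)
      = (d⁻¹ ^ b3) • (u3 ^ b3 * u2 ^ (b2+1) * u1 ^ b1 * u0 ^ b0) := by
  simp only [mul_assoc, pow_succ' u2]
  rw [← mul_assoc u2, comm_pow_r H.h23]
  simp only [mul_assoc, smul_mul_assoc]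

theorem mulu1 (H : QRel d u0 u1 u2 u3) (b3 b2 b1 b0 : ℕ) :
    (u3 ^ b3 * u2 ^ b2 * u1 ^ b1 * u0 ^ b0) * u1
      = (d⁻¹ ^ b0) • (u3 ^ b3 * u2 ^ b2 * u1 ^ (b1+1) * u0 ^ b0) := by
  simp only [mul_assoc, pow_succ u1]
  rw [comm_pow_l H.h01]
  simp only [mul_smul_comm]

theorem mulp1 (H : QRel d u0 u1 u2 u3) (hd : d ≠ 0) (hp1 : p1 = u3 * u1 - d • u2 ^ 2) (b3 b2 b1 b0 : ℕ) :
    p1 * (u3 ^ b3 * u2 ^ b2 * u1 ^ b1 * u0 ^ b0)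
      = (d⁻¹ ^ (b3 + b2)) • (u3 ^ (b3+1) * u2 ^ b2 * u1 ^ (b1+1) * u0 ^ b0)
        - (d * d⁻¹ ^ b3) • (u3 ^ b3 * u2 ^ (b2+2) * u1 ^ b1 * u0 ^ b0) := by
  have a1 := H.p1u3 hd
  have a2 := H.p1u2 hd
  rw [← hp1] at a1 a2
  have e1 : p1 * (u3 ^ b3 * u2 ^ b2 * u1 ^ b1 * u0 ^ b0) =
     (d⁻¹ ^ b3) • (u3 ^ b3 * (u2 ^ b2 * (p1 * (u1 ^ b1 * u0 ^ b0)))) := by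
    simp only [mul_assoc]
    rw [← mul_assoc p1, comm_pow_r a1, smul_mul_assoc, mul_assoc, ← mul_assoc p1, comm_pow_r a2, one_pow,
      one_smul, mul_assoc]
  rw [e1, hp1]
  have e2 : u2 ^ b2 * ((u3 * u1 - d • u2 ^ 2) * (u1 ^ b1 * u0 ^ b0)) =
     (d⁻¹ ^ b2) • (u3 * (u2 ^ b2 * (u1 ^ (b1+1) * u0 ^ b0))) - d • (u2 ^ (b2+2) * (u1 ^ b1 * u0 ^ b0)) := by
    simp only [sub_mul, mul_sub, smul_mul_assoc, mul_smul_comm, mul_assoc]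
    rw [← mul_assoc _ u3, comm_pow_l H.h23, pow_add u2, pow_succ' u1]
    simp only [smul_mul_assoc, mul_assoc]
  rw [e2]
  simp only [mul_sub, mul_smul_comm, smul_sub, smul_smul, pow_add, pow_one, mul_assoc]
  congr 2
  ring

theorem mulp0 (H : QRel d u0 u1 u2 u3) (hd : d ≠ 0) (hp0 : p0 = u2 * u0 - d • u1 ^ 2) (b3 b2 b1 b0 : ℕ) :
    (u3 ^ b3 * u2 ^ b2 * u1 ^ b1 * u0 ^ b0) * p0
      = (d⁻¹ ^ (b0 + b1)) • (u3 ^ b3 * u2 ^ (b2+1) * u1 ^ b1 * u0 ^ (b0+1))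
        - (d * d⁻¹ ^ b0) • (u3 ^ b3 * u2 ^ b2 * u1 ^ (b1+2) * u0 ^ b0) := by
  have a1 := H.p0u0 hd
  have a2 := H.p0u1 hd
  rw [← hp0] at a1 a2
  have a1' : u0 * p0 = d⁻¹ • (p0 * u0) := by rw [a1, smul_smul, inv_mul_cancel₀ hd, one_smul]
  have a2' : u1 * p0 = (1:K) • (p0 * u1) := by rw [a2, one_smul, one_smul]
  have e1 : (u3 ^ b3 * u2 ^ b2 * u1 ^ b1 * u0 ^ b0) * p0 =
     (d⁻¹ ^ b0) • (u3 ^ b3 * (u2 ^ b2 * (p0 * (u1 ^ b1 * u0 ^ b0)))) := by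
    simp only [mul_assoc]
    rw [comm_pow_l a1', mul_smul_comm, ← mul_assoc _ p0, comm_pow_l a2', one_pow,
      one_smul, mul_smul_comm, mul_smul_comm, mul_assoc]
  rw [e1, hp0]
  have e2 : u2 ^ b2 * ((u2 * u0 - d • u1 ^ 2) * (u1 ^ b1 * u0 ^ b0)) =
     (d⁻¹ ^ b1) • (u2 ^ (b2+1) * (u1 ^ b1 * u0 ^ (b0+1))) - d • (u2 ^ b2 * (u1 ^ (b1+2) * u0 ^ b0)) := by
    simp only [sub_mul, mul_sub, smul_mul_assoc, mul_smul_comm, mul_assoc]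
    rw [← mul_assoc u0, comm_pow_r H.h01, add_comm b1 2, pow_add u1, pow_succ u2, pow_succ' u0]
    simp only [smul_mul_assoc, mul_smul_comm, mul_assoc]
  rw [e2]
  simp only [mul_sub, mul_smul_comm, smul_sub, smul_smul, pow_add, pow_one, mul_assoc]
  congr 2
  ring
end Mon
end Abs
theorem qq_ne : qq ≠ 0 := RatFunc.X_ne_zero

/-- evaluation of an integer polynomial at `q` -/
abbrev ev (p : Polynomial ℤ) : F := Polynomial.eval₂ (Int.castRingHom F) qq p

theorem int_eval_eq (p : Polynomial ℤ) :
    ev p = algebraMap (Polynomial ℚ) F (p.map (Int.castRingHom ℚ)) := by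
  have : (algebraMap (Polynomial ℚ) F) (p.map (Int.castRingHom ℚ))
      = ((algebraMap (Polynomial ℚ) F)) (Polynomial.eval₂ (Polynomial.C.comp (Int.castRingHom ℚ)) Polynomial.X p) := rfl
  rw [this, Polynomial.hom_eval₂, RatFunc.algebraMap_X]
  exact congrArg (fun f => Polynomial.eval₂ f qq p) (Subsingleton.elim _ _)

theorem ev_inj {p r : Polynomial ℤ} (h : ev p = ev r) : p = r := by
  rw [int_eval_eq, int_eval_eq] at h
  have := RatFunc.algebraMap_injective ℚ h
  exact Polynomial.map_injective _ (Int.cast_injective) this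

theorem ev_mul_X_pow (n : ℕ) (p : Polynomial ℤ) : ev (Polynomial.X ^ n * p) = qq ^ n * ev p := by
  simp [ev, Polynomial.eval₂_mul, Polynomial.eval₂_pow]

theorem kap_ne : (1 - (qq⁻¹) ^ 2 : F) ≠ 0 := by
  intro h
  have h2 : qq ^ 2 = 1 := by
    have := qq_ne
    field_simp at h
    simpa [sub_eq_zero] using h
  have : ev (Polynomial.X ^ 2 * 1) = ev 1 := by
    rw [ev_mul_X_pow, h2, one_mul]
  have := congrArg Polynomial.natDegree (ev_inj this)
  simp at this

theorem bar_fix {bar : F →+* F} (hb : bar qq = qq⁻¹) (p : Polynomial ℤ)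
    (h : bar (qq * ev p) = qq * ev p) : p = 0 := by
  by_contra hp
  have hq := qq_ne
  have e1 : bar (ev p) = Polynomial.eval₂ (Int.castRingHom F) qq⁻¹ p := by
    rw [ev, Polynomial.hom_eval₂, hb]
    exact congrArg (fun f => Polynomial.eval₂ f qq⁻¹ p) (Subsingleton.elim _ _)
  let _ : Invertible (qq⁻¹) := invertibleOfNonzero (inv_ne_zero hq)
  have e2 := Polynomial.eval₂_reverse_mul_pow (Int.castRingHom F) qq⁻¹ p
  rw [invOf_eq_inv, inv_inv] at e2
  rw [map_mul, e1, hb, ← e2] at h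
  change qq⁻¹ * (ev p.reverse * _) = _ at h
  have e3 : ev (Polynomial.X ^ (p.natDegree + 2) * p) = ev p.reverse := by
    have e6 : ev p.reverse = (qq ^ (p.natDegree + 1)) * (qq⁻¹ * (ev p.reverse * qq⁻¹ ^ p.natDegree)) := by
      rw [inv_pow]
      field_simp
      ring
    rw [ev_mul_X_pow, e6, h]
    ring
  have e4 := congrArg Polynomial.natDegree (ev_inj e3)
  have e5 := Polynomial.reverse_natDegree_le p
  rw [Polynomial.natDegree_X_pow_mul _ hp] at e4
  omega

/-- the grading by `b₃ + b₀` -/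
def mu (b : Idx) : ℕ := b.1 + b.2.2.2

theorem tri_refl (a : Idx) : tri a a := ⟨0, 0, by simp⟩

theorem tri_mu {a b : Idx} (h : b ∈ Sset a) : mu b < mu a := by
  obtain ⟨⟨s, r, h1, h2, h3, h4⟩, hne⟩ := h
  rcases a with ⟨a3, a2, a1, a0⟩
  rcases b with ⟨b3, b2, b1, b0⟩
  simp only [mu] at *
  by_contra hc
  apply hne
  have : s = 0 := by omega
  have : r = 0 := by omega
  simp only [Prod.mk.injEq]
  omega

theorem tri_N {a b : Idx} (h : tri a b) : Nnum b = Nnum a := by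
  obtain ⟨s, r, h1, h2, h3, h4⟩ := h
  simp only [Nnum, h1, h2, h3, h4]
  ring

theorem qrel_of_deriv {K R : Type*} [Field K] [Ring R] [Algebra K R] {κ d : K} (hκ : κ ≠ 0) {A w0 w1 w2 w3 : R}
    (a0 : A * w0 - w0 * A = κ • w1) (a1 : A * w1 - w1 * A = κ • w2) (a2 : A * w2 - w2 * A = κ • w3)
    (h01 : w0 * w1 = d⁻¹ • (w1 * w0)) (h12 : w1 * w2 = d⁻¹ • (w2 * w1))
    (h23 : w2 * w3 = d⁻¹ • (w3 * w2)) : QRel d w0 w1 w2 w3 := by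
  have der : ∀ {x y x' y' : R}, A * x - x * A = κ • x' → A * y - y * A = κ • y' →
      A * (x * y) - x * y * A = κ • (x' * y + x * y') := by
    intro x y x' y' h1 h2
    have : A * (x * y) - x * y * A = (A * x - x * A) * y + x * (A * y - y * A) := by noncomm_ring
    rw [this, h1, h2, smul_mul_assoc, mul_smul_comm, smul_add]
  have canc : ∀ {x y : R}, κ • x = κ • y → x = y := fun h => smul_right_injective R hκ h
  have h02 : w0 * w2 = d⁻¹ • (w2 * w0) + (d⁻¹ - 1) • (w1 * w1) := by
    have e1 := der a0 a1
    have e2 := der a1 a0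
    rw [h01, mul_smul_comm, smul_mul_assoc, ← smul_sub, e2, smul_comm] at e1
    have e3 := canc e1
    have : w0 * w2 = (w1 * w1 + w0 * w2) - w1 * w1 := by abel
    rw [this, ← e3]
    module
  have h13 : w1 * w3 = d⁻¹ • (w3 * w1) + (d⁻¹ - 1) • (w2 * w2) := by
    have e1 := der a1 a2
    have e2 := der a2 a1
    rw [h12, mul_smul_comm, smul_mul_assoc, ← smul_sub, e2, smul_comm] at e1
    have e3 := canc e1
    have : w1 * w3 = (w2 * w2 + w1 * w3) - w2 * w2 := by abel
    rw [this, ← e3]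
    module
  refine ⟨h01, h12, h23, h02, h13, ?_⟩
  have e1 := der a0 a2
  have e2 := der a2 a0
  have e3 := der a1 a1
  have e4 : A * (w0 * w2) - w0 * w2 * A =
     d⁻¹ • (A * (w2 * w0) - w2 * w0 * A) + (d⁻¹ - 1) • (A * (w1 * w1) - w1 * w1 * A) := by
    rw [h02, mul_add, add_mul, mul_smul_comm, smul_mul_assoc, mul_smul_comm, smul_mul_assoc]
    module
  rw [e1, e2, e3, smul_comm, smul_comm _ κ, ← smul_add] at e4
  have e5 := canc e4
  have : w0 * w3 = (w1 * w2 + w0 * w3) - w1 * w2 := by abel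
  rw [this, e5, h12]
  module

section Conc
variable {R : Type*} [Ring R] [Algebra F R]

/-- abstract set-up -/
structure SH (bar : F →+* F) (σ : R → R) (B E : Idx → R) : Prop where
  hbar : bar qq = qq⁻¹
  add : ∀ x y, σ (x + y) = σ x + σ y
  mul : ∀ x y, σ (x * y) = σ y * σ x
  smul : ∀ (c : F) x, σ (c • x) = bar c • σ x
  c1 : ∀ a, ∃ φ : Idx →₀ Polynomial ℤ, (↑φ.support : Set Idx) ⊆ Sset a ∧
    B a - E a = φ.sum fun b p => (qq * Polynomial.eval₂ (Int.castRingHom F) qq p) • E b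
  eig : ∀ a, σ (B a) = qq ^ (-Nnum a) • B a
  indep : LinearIndependent F E

variable {E : Idx → R}

/-- the lattice spanned by `q^k E[b]`, `k ≥ m`, `a ⊴ b` -/
def QLat (E : Idx → R) (m : ℤ) (a : Idx) : AddSubgroup R :=
  AddSubgroup.closure {x | ∃ (k : ℤ) (b : Idx), m ≤ k ∧ tri a b ∧ x = qq ^ k • E b}

theorem QLat_basic {m k : ℤ} {a b : Idx} (hk : m ≤ k) (h : tri a b) : qq ^ k • E b ∈ QLat E m a :=
  AddSubgroup.subset_closure ⟨k, b, hk, h, rfl⟩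

theorem QLat_mono {m m' : ℤ} {a : Idx} (h : m' ≤ m) : QLat E m a ≤ QLat E m' a := by
  apply AddSubgroup.closure_mono
  rintro x ⟨k, b, h1, h2, h3⟩
  exact ⟨k, b, h.trans h1, h2, h3⟩

theorem QLat_smul {m : ℤ} {a : Idx} (j : ℤ) {x : R} (h : x ∈ QLat E m a) : qq ^ j • x ∈ QLat E (j + m) a := by
  induction h using AddSubgroup.closure_induction with
  | mem x hx =>
    obtain ⟨k, b, h1, h2, rfl⟩ := hx
    rw [smul_smul, ← zpow_add₀ qq_ne]
    exact QLat_basic (by omega) h2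
  | zero => rw [smul_zero]; exact zero_mem _
  | add x y _ _ h1 h2 => rw [smul_add]; exact add_mem h1 h2
  | neg x _ h1 => rw [smul_neg]; exact neg_mem h1

theorem QLat_op {m j : ℤ} {a a' : Idx} (T : R →ₗ[F] R)
    (hT : ∀ b, tri a b → T (E b) ∈ QLat E j a') {x : R} (h : x ∈ QLat E m a) : T x ∈ QLat E (m + j) a' := by
  induction h using AddSubgroup.closure_induction with
  | mem x hx =>
    obtain ⟨k, b, h1, h2, rfl⟩ := hx
    rw [map_smul]
    exact QLat_mono (by omega) (QLat_smul k (hT b h2))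
  | zero => rw [map_zero]; exact zero_mem _
  | add x y _ _ h1 h2 => rw [map_add]; exact add_mem h1 h2
  | neg x _ h1 => rw [map_neg]; exact neg_mem h1

/-- span of `E[c]` with small `mu` -/
def Vs (E : Idx → R) (m : ℕ) : Submodule F R := Submodule.span F {x | ∃ c : Idx, mu c < m ∧ x = E c}

theorem Vs_mono {m n : ℕ} (h : m ≤ n) : Vs E m ≤ Vs E n := by
  apply Submodule.span_mono
  rintro x ⟨c, h1, h2⟩
  exact ⟨c, by omega, h2⟩

variable {bar : F →+* F} {σ : R → R} {B : Idx → R}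

theorem cond1_lat (hσ : SH bar σ B E) (a : Idx) : B a - E a ∈ QLat E 1 a := by
  obtain ⟨φ, h1, h2⟩ := hσ.c1 a
  rw [h2]
  refine AddSubgroup.sum_mem _ fun b hb => ?_
  have ht : tri a b := (h1 hb).1
  generalize φ b = p
  dsimp only
  rw [Polynomial.eval₂_eq_sum_range, Finset.mul_sum, Finset.sum_smul]
  refine AddSubgroup.sum_mem _ fun i _ => ?_
  have : (qq * ((Int.castRingHom F) (p.coeff i) * qq ^ i)) • E b = (p.coeff i) • (qq ^ ((i:ℤ) + 1) • E b) := by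
    rw [← Int.cast_smul_eq_zsmul F, smul_smul, zpow_add₀ qq_ne]
    congr 1
    simp
    ring
  rw [this]
  exact AddSubgroup.zsmul_mem _ (QLat_basic (by omega) ht) _


theorem sig_zero (hσ : SH bar σ B E) : σ 0 = 0 := by
  have := hσ.add 0 0
  simpa using this

theorem sig_sub (hσ : SH bar σ B E) (x y : R) : σ (x - y) = σ x - σ y := by
  have := hσ.add (x - y) y
  rw [sub_add_cancel] at this
  rw [this, add_sub_cancel_right]

theorem cond1_Vs (hσ : SH bar σ B E) (a : Idx) : B a - E a ∈ Vs E (mu a) := by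
  obtain ⟨φ, h1, h2⟩ := hσ.c1 a
  rw [h2]
  refine Submodule.sum_mem _ fun b hb => ?_
  exact Submodule.smul_mem _ _ (Submodule.subset_span ⟨b, tri_mu (h1 hb), rfl⟩)

theorem sig_E (hσ : SH bar σ B E) (m : ℕ) : ∀ c : Idx, mu c < m →
    σ (E c) - qq ^ (-Nnum c) • E c ∈ Vs E (mu c) := by
  induction m with
  | zero => intro c hc; omega
  | succ m ih =>
    intro c hc
    have hy := cond1_Vs hσ c
    have hσy : σ (B c - E c) ∈ Vs E (mu c) := by
      generalize B c - E c = y at hy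
      induction hy using Submodule.span_induction with
      | mem x hx =>
        obtain ⟨b, hb, rfl⟩ := hx
        have h1 := Vs_mono hb.le (ih b (by omega))
        have h2 : qq ^ (-Nnum b) • E b ∈ Vs E (mu c) :=
          Submodule.smul_mem _ _ (Submodule.subset_span ⟨b, hb, rfl⟩)
        have := add_mem h1 h2
        rwa [sub_add_cancel] at this
      | zero => rw [sig_zero hσ]; exact zero_mem _
      | add x y _ _ h1 h2 => rw [hσ.add]; exact add_mem h1 h2
      | smul k x _ h1 => rw [hσ.smul]; exact Submodule.smul_mem _ _ h1
    have e : σ (E c) - qq ^ (-Nnum c) • E c = qq ^ (-Nnum c) • (B c - E c) - σ (B c - E c) := by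
      rw [sig_sub hσ, hσ.eig c, smul_sub]
      abel
    rw [e]
    exact sub_mem (Submodule.smul_mem _ _ hy) hσy

theorem sig_sum (hσ : SH bar σ B E) {ι : Type*} (s : Finset ι) (f : ι → R) :
    σ (∑ i ∈ s, f i) = ∑ i ∈ s, σ (f i) := by
  classical
  induction s using Finset.induction_on with
  | empty => simpa using sig_zero hσ
  | insert a s ha ih => rw [Finset.sum_insert ha, Finset.sum_insert ha, hσ.add, ih]

theorem uniq (hσ : SH bar σ B E)
    {a : Idx} {x : R} (hx : x ∈ QLat E 1 a) (hs : σ x = qq ^ (-Nnum a) • x) : x = 0 := by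
  classical
  have hE := hσ.indep
  obtain ⟨g, hg⟩ := LinearMap.exists_leftInverse_of_injective (Finsupp.linearCombination F E)
    (LinearMap.ker_eq_bot.mpr hE)
  have gE : ∀ b, g (E b) = Finsupp.single b 1 := by
    intro b
    have := LinearMap.congr_fun hg (Finsupp.single b 1)
    simpa using this
  have gV : ∀ m, ∀ y ∈ Vs E m, ∀ b, m ≤ mu b → g y b = 0 := by
    intro m y hy b hb
    induction hy using Submodule.span_induction with
    | mem x hx =>
      obtain ⟨c, hc, rfl⟩ := hx
      rw [gE, Finsupp.single_apply, if_neg]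
      rintro rfl; omega
    | zero => simp
    | add x y _ _ h1 h2 => simp [h1, h2]
    | smul k x _ h1 => simp [h1]
  have P1 : ∀ b, ∃ p : Polynomial ℤ, g x b = qq * ev p := by
    intro b
    clear hs
    induction hx using AddSubgroup.closure_induction with
    | mem x hx =>
      obtain ⟨k, c, h1, h2, rfl⟩ := hx
      rw [map_smul, gE, Finsupp.smul_apply, Finsupp.single_apply]
      by_cases hcb : c = b
      · refine ⟨Polynomial.X ^ (k - 1).toNat * 1, ?_⟩
        rw [ev_mul_X_pow, if_pos hcb]
        have : ((k-1).toNat : ℤ) = k - 1 := by omega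
        rw [← zpow_natCast, this, zpow_sub_one₀ qq_ne]
        have := qq_ne
        simp [ev]
        field_simp
      · exact ⟨0, by simp [hcb]⟩
    | zero => exact ⟨0, by simp⟩
    | add x y _ _ h1 h2 =>
      obtain ⟨p, hp⟩ := h1
      obtain ⟨r, hr⟩ := h2
      exact ⟨p + r, by simp [hp, hr, ev, Polynomial.eval₂_add, mul_add]⟩
    | neg x _ h1 =>
      obtain ⟨p, hp⟩ := h1
      exact ⟨-p, by simp [hp, ev]⟩
  have P2 : ∀ b, g x b ≠ 0 → tri a b := by
    intro b
    clear hs P1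
    induction hx using AddSubgroup.closure_induction with
    | mem x hx =>
      obtain ⟨k, c, h1, h2, rfl⟩ := hx
      rw [map_smul, gE, Finsupp.smul_apply, Finsupp.single_apply]
      by_cases hcb : c = b
      · intro _; exact hcb ▸ h2
      · simp [hcb]
    | zero => simp
    | add x y _ _ h1 h2 =>
      intro h
      by_contra hc
      have e1 := not_imp_comm.mp h1 hc
      have e2 := not_imp_comm.mp h2 hc
      exact h (by simp [e1, e2])
    | neg x _ h1 => simpa using h1
  have P3 : x = Finsupp.linearCombination F E (g x) := by
    clear hs P1 P2
    induction hx using AddSubgroup.closure_induction with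
    | mem x hx =>
      obtain ⟨k, c, h1, h2, rfl⟩ := hx
      rw [map_smul, gE]; simp
    | zero => simp
    | add x y _ _ h1 h2 => rw [map_add, map_add, ← h1, ← h2]
    | neg x _ h1 => rw [map_neg, map_neg, ← h1]
  by_contra hne
  have hsupp : (g x).support.Nonempty := by
    rw [Finsupp.support_nonempty_iff]
    intro h0
    rw [h0, map_zero] at P3
    exact hne P3
  obtain ⟨b, hb, hmax⟩ := Finset.exists_max_image _ mu hsupp
  have hb0 : g x b ≠ 0 := by simpa using hb
  have key1 : g (σ x) b = bar (g x b) * qq ^ (-Nnum b) := by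
    conv_lhs => rw [P3]
    rw [Finsupp.linearCombination_apply, Finsupp.sum, sig_sum hσ, map_sum, Finsupp.finsetSum_apply]
    have each : ∀ c ∈ (g x).support, g (σ (g x c • E c)) b = if c = b then bar (g x b) * qq ^ (-Nnum b) else 0 := by
      intro c hc
      rw [hσ.smul, map_smul, Finsupp.smul_apply]
      have h1 := gV _ _ (sig_E hσ _ c (Nat.lt_succ_self _)) b
      have h2 : g (σ (E c)) b = g (σ (E c) - qq ^ (-Nnum c) • E c) b + qq ^ (-Nnum c) * (Finsupp.single c (1:F)) b := by
        rw [map_sub, map_smul, gE, Finsupp.sub_apply, Finsupp.smul_apply, smul_eq_mul, sub_add_cancel]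
      rw [h2, h1 (hmax c hc)]
      by_cases hcb : c = b
      · subst hcb; simp
      · simp [hcb]
    rw [Finset.sum_congr rfl each, Finset.sum_ite_eq' , if_pos hb]
  rw [hs, map_smul, Finsupp.smul_apply, tri_N (P2 b hb0), smul_eq_mul, mul_comm] at key1
  have key2 := mul_right_cancel₀ (zpow_ne_zero _ qq_ne) key1
  obtain ⟨p, hp⟩ := P1 b
  rw [hp] at key2 hb0
  have := bar_fix hσ.hbar p key2.symm
  exact hb0 (by simp [this, ev])


/-- dual PBW element -/
def EE (w0 w1 w2 w3 : R) (b : Idx) : R :=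
  qq ^ bexp b • (w3 ^ b.1 * w2 ^ b.2.1 * w1 ^ b.2.2.1 * w0 ^ b.2.2.2)

/-- eigenvalues of `σ` on generators -/
structure SU (σ : R → R) (w0 w1 w2 w3 : R) : Prop where
  s0 : σ w0 = w0
  s1 : σ w1 = qq ^ 2 • w1
  s2 : σ w2 = qq ^ 4 • w2
  s3 : σ w3 = qq ^ 6 • w3

section Rels
variable {w0 w1 w2 w3 : R}

theorem B_eq_E (hσ : SH bar σ B E) {a : Idx} (h : ∀ b, b ∉ Sset a) : B a = E a := by
  obtain ⟨φ, h1, h2⟩ := hσ.c1 a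
  have : φ = 0 := by
    rw [← Finsupp.support_eq_empty, Finset.eq_empty_iff_forall_notMem]
    intro b hb
    exact h b (h1 hb)
  rw [this, Finsupp.sum_zero_index, sub_eq_zero] at h2
  exact h2

theorem Sset_empty {a : Idx} (h : ∀ s r : ℕ, (s:ℤ) ≤ a.1 → (r:ℤ) ≤ a.2.2.2 → (0:ℤ) ≤ a.2.1 + 2 * s - r →
    (0:ℤ) ≤ a.2.2.1 - s + 2 * r → s = 0 ∧ r = 0) (b : Idx) : b ∉ Sset a := by
  rintro ⟨⟨s, r, h1, h2, h3, h4⟩, hne⟩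
  obtain ⟨rfl, rfl⟩ := h s r (by omega) (by omega) (by omega) (by omega)
  apply hne
  rcases a with ⟨a3, a2, a1, a0⟩
  rcases b with ⟨b3, b2, b1, b0⟩
  simp only [Prod.mk.injEq] at *
  omega

theorem rel_aux {x y : R} {i j k : ℤ} (h : qq ^ i • (x * qq ^ j • y) = qq ^ k • (y * x)) (hk : k + 2 = i + j) :
    x * y = (qq ^ 2)⁻¹ • (y * x) := by
  have hq := qq_ne
  rw [mul_smul_comm, smul_smul, ← zpow_add₀ hq, ← hk] at h
  have : x * y = qq ^ (-(k+2)) • (qq ^ (k+2) • (x * y)) := by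
    rw [smul_smul, ← zpow_add₀ hq]; simp
  rw [this, h, smul_smul, ← zpow_add₀ hq]
  have e : -(k+2) + k = -((2:ℕ):ℤ) := by push_cast; ring
  rw [e, zpow_neg, zpow_natCast]

theorem rel01 (hσ : SH bar σ B (EE w0 w1 w2 w3)) (hs : SU σ w0 w1 w2 w3) :
    w0 * w1 = (qq ^ 2)⁻¹ • (w1 * w0) := by
  have h := hσ.eig (0,0,1,1)
  rw [B_eq_E hσ (Sset_empty (by intro s r; simp; omega))] at h
  have e : EE w0 w1 w2 w3 (0,0,1,1) = w1 * w0 := by simp [EE, bexp]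
  rw [e, hσ.mul, hs.s0, hs.s1] at h
  apply rel_aux (i := 0) (j := 2) (k := 0) _ (by norm_num)
  have eN : Nnum (0,0,1,1) = 0 := by simp [Nnum]
  rw [eN] at h
  simpa using h

theorem rel12 (hσ : SH bar σ B (EE w0 w1 w2 w3)) (hs : SU σ w0 w1 w2 w3) :
    w1 * w2 = (qq ^ 2)⁻¹ • (w2 * w1) := by
  have h := hσ.eig (0,1,1,0)
  rw [B_eq_E hσ (Sset_empty (by intro s r; simp; omega))] at h
  have e : EE w0 w1 w2 w3 (0,1,1,0) = w2 * w1 := by simp [EE, bexp]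
  rw [e, hσ.mul, hs.s1, hs.s2] at h
  apply rel_aux (i := 2) (j := 4) (k := 4) _ (by norm_num)
  have eN : Nnum (0,1,1,0) = -4 := by simp [Nnum]
  rw [eN, smul_mul_assoc] at h
  exact_mod_cast h

theorem rel23 (hσ : SH bar σ B (EE w0 w1 w2 w3)) (hs : SU σ w0 w1 w2 w3) :
    w2 * w3 = (qq ^ 2)⁻¹ • (w3 * w2) := by
  have h := hσ.eig (1,1,0,0)
  rw [B_eq_E hσ (Sset_empty (by intro s r; simp; omega))] at h
  have e : EE w0 w1 w2 w3 (1,1,0,0) = w3 * w2 := by simp [EE, bexp]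
  rw [e, hσ.mul, hs.s2, hs.s3] at h
  apply rel_aux (i := 4) (j := 6) (k := 8) _ (by norm_num)
  have eN : Nnum (1,1,0,0) = -8 := by simp [Nnum]
  rw [eN, smul_mul_assoc] at h
  exact_mod_cast h

end Rels

section Ops
variable {w0 w1 w2 w3 p1 p0 : R}

theorem inv_sq_pow (n : ℕ) : ((qq ^ 2)⁻¹ : F) ^ n = qq ^ (-2 * (n:ℤ)) := by
  rw [inv_pow, ← pow_mul, ← zpow_natCast, ← zpow_neg]
  congr 1

theorem ch2 (n : ℕ) : Nat.choose (n+1) 2 = n + Nat.choose n 2 := by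
  rw [Nat.choose_succ_succ' n 1, Nat.choose_one_right]

theorem op_u3 (b3 b2 b1 b0 : ℕ) : w3 * EE w0 w1 w2 w3 (b3,b2,b1,b0)
    = qq ^ (-(b3:ℤ)) • EE w0 w1 w2 w3 (b3+1,b2,b1,b0) := by
  simp only [EE, bexp, mul_smul_comm, smul_smul, pow_succ' w3, mul_assoc, ch2, ← zpow_natCast, ← zpow_add₀ qq_ne]
  congr 2
  push_cast
  ring

theorem op_u0 (b3 b2 b1 b0 : ℕ) : EE w0 w1 w2 w3 (b3,b2,b1,b0) * w0
    = qq ^ (-(b0:ℤ)) • EE w0 w1 w2 w3 (b3,b2,b1,b0+1) := by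
  simp only [EE, bexp, smul_mul_assoc, smul_smul, pow_succ w0, mul_assoc, ch2, ← zpow_natCast, ← zpow_add₀ qq_ne]
  congr 2
  push_cast
  ring

theorem op_u2 (H : QRel (qq ^ 2) w0 w1 w2 w3) (b3 b2 b1 b0 : ℕ) : w2 * EE w0 w1 w2 w3 (b3,b2,b1,b0)
    = qq ^ (-2 * (b3:ℤ) - b2) • EE w0 w1 w2 w3 (b3,b2+1,b1,b0) := by
  simp only [EE, bexp, mul_smul_comm, mulu2 H]
  simp only [inv_sq_pow]
  simp only [smul_smul, ch2, ← zpow_natCast, ← zpow_add₀ qq_ne]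
  congr 2
  push_cast
  ring

theorem op_u1 (H : QRel (qq ^ 2) w0 w1 w2 w3) (b3 b2 b1 b0 : ℕ) : EE w0 w1 w2 w3 (b3,b2,b1,b0) * w1
    = qq ^ (-2 * (b0:ℤ) - b1) • EE w0 w1 w2 w3 (b3,b2,b1+1,b0) := by
  simp only [EE, bexp, smul_mul_assoc, mulu1 H]
  simp only [inv_sq_pow]
  simp only [smul_smul, ch2, ← zpow_natCast, ← zpow_add₀ qq_ne]
  congr 2
  push_cast
  ring

theorem op_p1 (H : QRel (qq ^ 2) w0 w1 w2 w3) (hp1 : p1 = w3 * w1 - qq ^ 2 • w2 ^ 2) (b3 b2 b1 b0 : ℕ) :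
    p1 * EE w0 w1 w2 w3 (b3,b2,b1,b0)
    = qq ^ (-3 * (b3:ℤ) - 2 * b2 - b1) • EE w0 w1 w2 w3 (b3+1,b2,b1+1,b0)
      - qq ^ (1 -2 * (b3:ℤ) - 2 * b2) • EE w0 w1 w2 w3 (b3,b2+2,b1,b0) := by
  simp only [EE, bexp, mul_smul_comm, mulp1 H (pow_ne_zero 2 qq_ne) hp1]
  simp only [inv_sq_pow]
  simp only [smul_sub, smul_smul, ch2, ← zpow_natCast, ← zpow_add₀ qq_ne]
  congr 3 <;> push_cast <;> ring

theorem op_p0 (H : QRel (qq ^ 2) w0 w1 w2 w3) (hp0 : p0 = w2 * w0 - qq ^ 2 • w1 ^ 2) (b3 b2 b1 b0 : ℕ) :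
    EE w0 w1 w2 w3 (b3,b2,b1,b0) * p0
    = qq ^ (-3 * (b0:ℤ) - 2 * b1 - b2) • EE w0 w1 w2 w3 (b3,b2+1,b1,b0+1)
      - qq ^ (1 -2 * (b0:ℤ) - 2 * b1) • EE w0 w1 w2 w3 (b3,b2,b1+2,b0) := by
  simp only [EE, bexp, smul_mul_assoc, mulp0 H (pow_ne_zero 2 qq_ne) hp0]
  simp only [inv_sq_pow]
  simp only [smul_sub, smul_smul, ch2, ← zpow_natCast, ← zpow_add₀ qq_ne]
  congr 3 <;> push_cast <;> ring

end Ops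

end Conc

section SigK
variable {K R : Type*} [Field K] [Ring R] [Algebra K R]

/-- abstract semilinear anti-automorphism -/
structure SK (q : K) (bar : K →+* K) (σ : R → R) (w0 w1 w2 w3 p1 p0 z : R) : Prop where
  hq : q ≠ 0
  hbar : bar q = q⁻¹
  add : ∀ x y, σ (x + y) = σ x + σ y
  mul : ∀ x y, σ (x * y) = σ y * σ x
  smul : ∀ (c : K) x, σ (c • x) = bar c • σ x
  s0 : σ w0 = w0
  s1 : σ w1 = q ^ 2 • w1
  s2 : σ w2 = q ^ 4 • w2
  s3 : σ w3 = q ^ 6 • w3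
  H : QRel (q ^ 2) w0 w1 w2 w3
  one : σ 1 = 1
  hp1 : p1 = w3 * w1 - q ^ 2 • w2 ^ 2
  hp0 : p0 = w2 * w0 - q ^ 2 • w1 ^ 2
  hz : z = w3 * w0 - q ^ 2 • (w2 * w1)

variable {q : K} {bar : K →+* K} {σ : R → R} {w0 w1 w2 w3 p1 p0 z : R}

theorem SK.sub (h : SK q bar σ w0 w1 w2 w3 p1 p0 z) (x y : R) : σ (x - y) = σ x - σ y := by
  have := h.add (x - y) y
  rw [sub_add_cancel] at this
  rw [this, add_sub_cancel_right]

theorem SK.bzpow (h : SK q bar σ w0 w1 w2 w3 p1 p0 z) (k : ℤ) : bar (q ^ k) = q ^ (-k) := by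
  rw [map_zpow₀, h.hbar, inv_zpow']

theorem SK.sigz (h : SK q bar σ w0 w1 w2 w3 p1 p0 z) : σ z = q ^ 4 • z := by
  have hq := h.hq
  rw [h.hz, h.sub, h.smul, h.mul, h.mul, h.s0, h.s1, h.s2, h.s3, map_pow, h.hbar, mul_smul_comm,
    smul_mul_assoc, mul_smul_comm, h.H.h03, h.H.h12]
  simp only [smul_sub, smul_add, smul_smul]
  match_scalars <;> (field_simp; try ring)

theorem SK.sigp1 (h : SK q bar σ w0 w1 w2 w3 p1 p0 z) : σ p1 = q ^ 6 • p1 := by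
  have hq := h.hq
  rw [h.hp1, pow_two w2, h.sub, h.smul, h.mul, h.mul, h.s1, h.s2, h.s3, map_pow, h.hbar]
  simp only [mul_smul_comm, smul_mul_assoc, h.H.h13]
  simp only [smul_sub, smul_add, smul_smul]
  match_scalars <;> (field_simp; try ring)

theorem SK.sigp0 (h : SK q bar σ w0 w1 w2 w3 p1 p0 z) : σ p0 = q ^ 2 • p0 := by
  have hq := h.hq
  rw [h.hp0, pow_two w1, h.sub, h.smul, h.mul, h.mul, h.s1, h.s2, h.s0, map_pow, h.hbar]
  simp only [mul_smul_comm, smul_mul_assoc, h.H.h02]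
  simp only [smul_sub, smul_add, smul_smul]
  match_scalars <;> (field_simp; try ring)

theorem SK.P (h : SK q bar σ w0 w1 w2 w3 p1 p0 z) : σ (p0 * p1) = q ^ 12 • (p0 * p1) := by
  have e := h.H.p1p0 (pow_ne_zero 2 h.hq)
  rw [← h.hp1, ← h.hp0] at e
  rw [h.mul, h.sigp1, h.sigp0, smul_mul_assoc, mul_smul_comm, e, smul_smul, smul_smul]
  congr 1
  ring

theorem SK.c (h : SK q bar σ w0 w1 w2 w3 p1 p0 z) (n : ℕ) : σ (cc (q ^ 2) z (p0 * p1) n) = q ^ (4 * (n:ℤ) - 4) • cc (q ^ 2) z (p0 * p1) n := by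
  have hq := h.hq
  induction n using Nat.twoStepInduction with
  | zero =>
    have := h.sub 0 0
    simpa [cc] using this
  | one => simpa [cc] using h.one
  | more n ih1 ih2 =>
    have hzP := qr_zP h.H (pow_ne_zero 2 hq) h.hp1 h.hp0 h.hz
    conv_rhs => rw [cc_succ' _ hzP]
    rw [cc, h.sub, h.smul, h.mul, h.mul, ih1, ih2, h.P, h.sigz, map_pow, h.hbar]
    simp only [mul_smul_comm, smul_mul_assoc, smul_sub, smul_smul]
    have e0 : (4 * (n:ℤ) - 4) = 4 * n + (-4 : ℤ) := by ring
    have e1 : (4 * ((n+1:ℕ):ℤ) - 4) = 4 * n + (0 : ℤ) := by push_cast; ring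
    have e2 : (4 * ((n+2:ℕ):ℤ) - 4) = 4 * n + (4 : ℤ) := by push_cast; ring
    rw [e0, e1, e2]
    simp only [zpow_add₀ hq]
    congr 2
    · norm_cast; ring
    · have : q ^ (-4:ℤ) = (q ^ 4)⁻¹ := by rw [zpow_neg]; norm_cast
      have h4 : q ^ (4:ℤ) = (q ^ 4) := by norm_cast
      rw [this, h4]
      field_simp

theorem SK.p1c (h : SK q bar σ w0 w1 w2 w3 p1 p0 z) (k : ℕ) : p1 * cc (q ^ 2) z (p0 * p1) (k+1) = (q^2)^k • (cc (q ^ 2) z (p0 * p1) (k+1) * p1) := by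
  have hd := pow_ne_zero 2 h.hq
  have e := h.H.p1p0 hd
  have e' := h.H.p1z hd
  rw [← h.hp1, ← h.hp0] at e
  rw [← h.hp1, ← h.hz] at e'
  apply cc_scal _ _ e'
  rw [← mul_assoc, e, smul_mul_assoc]

theorem SK.W (h : SK q bar σ w0 w1 w2 w3 p1 p0 z) (k : ℕ) : σ (p1 * cc (q ^ 2) z (p0 * p1) (k+1)) = q ^ (2 * (k:ℤ) + 6) • (p1 * cc (q ^ 2) z (p0 * p1) (k+1)) := by
  have hq := h.hq
  rw [h.mul, h.c, h.sigp1, h.p1c, smul_mul_assoc, mul_smul_comm, smul_smul, smul_smul]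
  congr 1
  simp only [← zpow_natCast, ← zpow_mul, ← zpow_add₀ hq]
  congr 1
  push_cast
  ring

theorem SK.X (h : SK q bar σ w0 w1 w2 w3 p1 p0 z) (m : ℕ) : σ (w3 * cc (q ^ 2) z (p0 * p1) (m+1) - q ^ 2 • (w2 * p1 * cc (q ^ 2) z (p0 * p1) m))
    = q ^ (2 * (m:ℤ) + 6) • (w3 * cc (q ^ 2) z (p0 * p1) (m+1) - q ^ 2 • (w2 * p1 * cc (q ^ 2) z (p0 * p1) m)) := by
  have hq := h.hq
  have e := h.H.p1u2 (pow_ne_zero 2 hq)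
  rw [← h.hp1, one_smul] at e
  conv_rhs => rw [keyA h.H (pow_ne_zero 2 hq) h.hp1 h.hp0 h.hz]
  rw [h.sub, h.smul, h.mul, h.mul, h.mul, h.c, h.c, h.sigp1, h.s2, h.s3, map_pow, h.hbar]
  simp only [mul_smul_comm, smul_mul_assoc, smul_sub, smul_smul, e]
  congr 2
  · simp only [← zpow_natCast, ← zpow_mul, ← zpow_add₀ hq]
    congr 1
    push_cast
    ring
  · rw [← inv_pow]
    simp only [← zpow_natCast, ← zpow_mul, ← zpow_add₀ hq, ← zpow_neg_one]
    congr 1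
    push_cast
    ring



/-- candidate for `B[n,0,0,n]` -/
def sS (q : K) (p1 p0 z : R) (n : ℕ) : R := q ^ (2 * (n:ℤ) * (n - 1)) • cc (q ^ 2) z (p0 * p1) (n+1)

/-- candidate for `B[m+1,0,0,m]` -/
def xX (q : K) (w2 w3 p1 p0 z : R) (m : ℕ) : R := q ^ ((m:ℤ) * (2 * m - 1)) •
  (w3 * cc (q ^ 2) z (p0 * p1) (m+1) - q ^ 2 • (w2 * p1 * cc (q ^ 2) z (p0 * p1) m))

/-- candidate for `B[k+1,0,1,k]` -/
def wW (q : K) (p1 p0 z : R) (k : ℕ) : R := q ^ ((k:ℤ) * (2 * k + 1)) • (p1 * cc (q ^ 2) z (p0 * p1) (k+1))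

theorem sS_zero : sS q p1 p0 z 0 = 1 := by simp [sS, cc]

theorem sS_one : sS q p1 p0 z 1 = z := by simp [sS, cc]

theorem xX_zero : xX q w2 w3 p1 p0 z 0 = w3 := by simp [xX, cc]

theorem wW_eq (h : SK q bar σ w0 w1 w2 w3 p1 p0 z) (k : ℕ) :
    wW q p1 p0 z k = q ^ (3 * (k:ℤ)) • (p1 * sS q p1 p0 z k) := by
  rw [wW, sS, mul_smul_comm, smul_smul, ← zpow_add₀ h.hq]
  congr 2
  ring

theorem xX_L (h : SK q bar σ w0 w1 w2 w3 p1 p0 z) (k : ℕ) :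
    xX q w2 w3 p1 p0 z (k+1) = q ^ ((k:ℤ) + 1) • (w3 * sS q p1 p0 z (k+1))
      - q ^ (2 * (k:ℤ) + 3) • (w2 * wW q p1 p0 z k) := by
  simp only [xX, sS, wW, smul_sub, mul_smul_comm, smul_smul, ← zpow_natCast, ← zpow_add₀ h.hq, mul_assoc]
  congr 3 <;> push_cast <;> ring

theorem xX_R (h : SK q bar σ w0 w1 w2 w3 p1 p0 z) (k : ℕ) :
    xX q w2 w3 p1 p0 z (k+1) = q ^ (3 * (k:ℤ) + 3) • (sS q p1 p0 z (k+1) * w3)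
      - q ^ (2 * (k:ℤ) + 1) • (wW q p1 p0 z k * w2) := by
  have hq := h.hq
  have e := h.H.p1u2 (pow_ne_zero 2 hq)
  rw [← h.hp1, one_smul] at e
  rw [xX, sS, wW, keyA h.H (pow_ne_zero 2 hq) h.hp1 h.hp0 h.hz, h.p1c]
  simp only [smul_mul_assoc, mul_assoc, e, smul_sub, smul_smul]
  congr 2
  · simp only [← zpow_natCast, ← zpow_mul, ← zpow_add₀ hq]
    congr 1
    push_cast
    ring
  · rw [← inv_pow]
    simp only [← zpow_natCast, ← zpow_mul, ← zpow_add₀ hq, ← zpow_neg_one]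
    congr 1
    push_cast
    ring

theorem sS_rec (h : SK q bar σ w0 w1 w2 w3 p1 p0 z) (m : ℕ) :
    sS q p1 p0 z (m+2) = q ^ ((m:ℤ) + 1) • (xX q w2 w3 p1 p0 z (m+1) * w0)
      - q ^ (2 * (m:ℤ) + 4) • ((q ^ (3 * (m:ℤ)) • (xX q w2 w3 p1 p0 z m * p0)) * w1) := by
  have hq := h.hq
  have e := keyC h.H (pow_ne_zero 2 hq) h.hp1 h.hp0 h.hz m
  have e1 : sS q p1 p0 z (m+2) = q ^ (2 * ((m:ℤ)+1)^2) • ((q^2) ^ (m+1) • cc (q ^ 2) z (p0 * p1) (m+3)) := by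
    rw [sS, smul_smul]
    congr 1
    simp only [← zpow_natCast, ← zpow_mul, ← zpow_add₀ hq]
    congr 1
    push_cast
    ring
  rw [e1, ← e, xX, xX]
  generalize w3 * cc (q ^ 2) z (p0 * p1) (m+2) - q^2 • (w2 * p1 * cc (q ^ 2) z (p0 * p1) (m+1)) = a
  generalize w3 * cc (q ^ 2) z (p0 * p1) (m+1) - q^2 • (w2 * p1 * cc (q ^ 2) z (p0 * p1) m) = b
  simp only [smul_mul_assoc, mul_assoc, smul_sub, smul_smul, ← zpow_natCast, ← zpow_mul, ← zpow_add₀ hq]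
  congr 3 <;> push_cast <;> ring

theorem sS_eig (h : SK q bar σ w0 w1 w2 w3 p1 p0 z) (n : ℕ) :
    σ (sS q p1 p0 z n) = q ^ (-Nnum (n,0,0,n)) • sS q p1 p0 z n := by
  rw [sS, h.smul, h.c, h.bzpow, smul_smul, smul_smul, ← zpow_add₀ h.hq, ← zpow_add₀ h.hq]
  congr 2
  simp only [Nnum]
  push_cast
  ring

theorem xX_eig (h : SK q bar σ w0 w1 w2 w3 p1 p0 z) (m : ℕ) :
    σ (xX q w2 w3 p1 p0 z m) = q ^ (-Nnum (m+1,0,0,m)) • xX q w2 w3 p1 p0 z m := by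
  rw [xX, h.smul, h.X, h.bzpow, smul_smul, smul_smul, ← zpow_add₀ h.hq, ← zpow_add₀ h.hq]
  congr 2
  simp only [Nnum]
  push_cast
  ring

theorem wW_eig (h : SK q bar σ w0 w1 w2 w3 p1 p0 z) (k : ℕ) :
    σ (wW q p1 p0 z k) = q ^ (-Nnum (k+1,0,1,k)) • wW q p1 p0 z k := by
  rw [wW, h.smul, h.W, h.bzpow, smul_smul, smul_smul, ← zpow_add₀ h.hq, ← zpow_add₀ h.hq]
  congr 2
  simp only [Nnum]
  push_cast
  ring

end SigK

section Tri
variable {R : Type*} [Ring R] [Algebra F R] {E : Idx → R}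

/-- `x` is unitriangular with leading term `E[a]` -/
def TR (E : Idx → R) (x : R) (a : Idx) : Prop := x - E a ∈ QLat E 1 a

theorem TR_mem {x : R} {a : Idx} (h : TR E x a) : x ∈ QLat E 0 a := by
  have h1 : qq ^ (0:ℤ) • E a ∈ QLat E 0 a := QLat_basic le_rfl (tri_refl a)
  rw [zpow_zero, one_smul] at h1
  have := add_mem (QLat_mono (by norm_num) h : x - E a ∈ QLat E 0 a) h1
  rwa [sub_add_cancel] at this

theorem TR_op (T : R →ₗ[F] R) {a a' : Idx} {x : R} (h : TR E x a)
    (hT : ∀ b, tri a b → T (E b) ∈ QLat E 0 a') (ha : T (E a) - E a' ∈ QLat E 1 a') : TR E (T x) a' := by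
  have h1 := QLat_op T hT h
  rw [add_zero] at h1
  have := add_mem h1 ha
  rwa [map_sub, sub_add_sub_cancel] at this

theorem TR_low (T : R →ₗ[F] R) {a a' : Idx} {x : R} (h : TR E x a)
    (hT : ∀ b, tri a b → T (E b) ∈ QLat E 1 a') : T x ∈ QLat E 1 a' := by
  have h1 := QLat_op T hT (TR_mem h)
  rwa [zero_add] at h1

theorem TR_sub {x y : R} {a : Idx} (h : TR E x a) (hy : y ∈ QLat E 1 a) : TR E (x - y) a := by
  have := sub_mem h hy
  rwa [sub_right_comm] at this

/-- scaled left multiplication -/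
def TL (k : ℤ) (w : R) : R →ₗ[F] R := qq ^ k • LinearMap.mulLeft F w
/-- scaled right multiplication -/
def TRt (k : ℤ) (w : R) : R →ₗ[F] R := qq ^ k • LinearMap.mulRight F w

theorem TL_ap (k : ℤ) (w x : R) : TL k w x = qq ^ k • (w * x) := rfl
theorem TRt_ap (k : ℤ) (w x : R) : TRt k w x = qq ^ k • (x * w) := rfl

variable {w0 w1 w2 w3 p1 p0 : R}

theorem tr_u3 {x : R} (m : ℕ) (h : TR (EE w0 w1 w2 w3) x (m,0,0,m)) :
    TR (EE w0 w1 w2 w3) (qq ^ (m:ℤ) • (w3 * x)) (m+1,0,0,m) := by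
  refine TR_op (TL m w3) h ?_ ?_
  · rintro ⟨b3,b2,b1,b0⟩ ⟨s, r, h1, h2, h3, h4⟩
    rw [TL_ap, op_u3, smul_smul, ← zpow_add₀ qq_ne]
    refine QLat_basic ?_ ⟨s, r, ?_⟩ <;> push_cast at * <;> omega
  · rw [TL_ap, op_u3, smul_smul, ← zpow_add₀ qq_ne]
    simp

theorem tr_u0 {x : R} (m : ℕ) (h : TR (EE w0 w1 w2 w3) x (m+1,0,0,m)) :
    TR (EE w0 w1 w2 w3) (qq ^ (m:ℤ) • (x * w0)) (m+1,0,0,m+1) := by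
  refine TR_op (TRt m w0) h ?_ ?_
  · rintro ⟨b3,b2,b1,b0⟩ ⟨s, r, h1, h2, h3, h4⟩
    rw [TRt_ap, op_u0, smul_smul, ← zpow_add₀ qq_ne]
    refine QLat_basic ?_ ⟨s, r, ?_⟩ <;> push_cast at * <;> omega
  · rw [TRt_ap, op_u0, smul_smul, ← zpow_add₀ qq_ne]
    simp

theorem tr_u2 (H : QRel (qq ^ 2) w0 w1 w2 w3) {x : R} (k : ℕ) (h : TR (EE w0 w1 w2 w3) x (k+1,0,1,k)) :
    qq ^ (2 * (k:ℤ) + 3) • (w2 * x) ∈ QLat (EE w0 w1 w2 w3) 1 (k+2,0,0,k+1) := by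
  refine TR_low (TL (2 * (k:ℤ) + 3) w2) h ?_
  rintro ⟨b3,b2,b1,b0⟩ ⟨s, r, h1, h2, h3, h4⟩
  rw [TL_ap, op_u2 H, smul_smul, ← zpow_add₀ qq_ne]
  refine QLat_basic ?_ ⟨s+1, r+1, ?_⟩ <;> push_cast at * <;> omega

theorem tr_u1 (H : QRel (qq ^ 2) w0 w1 w2 w3) {x : R} (m : ℕ) (h : TR (EE w0 w1 w2 w3) x (m+1,1,0,m+1)) :
    qq ^ (2 * (m:ℤ) + 4) • (x * w1) ∈ QLat (EE w0 w1 w2 w3) 1 (m+2,0,0,m+2) := by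
  refine TR_low (TRt (2 * (m:ℤ) + 4) w1) h ?_
  rintro ⟨b3,b2,b1,b0⟩ ⟨s, r, h1, h2, h3, h4⟩
  rw [TRt_ap, op_u1 H, smul_smul, ← zpow_add₀ qq_ne]
  refine QLat_basic ?_ ⟨s+1, r+1, ?_⟩ <;> push_cast at * <;> omega

theorem tr_p1 (H : QRel (qq ^ 2) w0 w1 w2 w3) (hp1 : p1 = w3 * w1 - qq ^ 2 • w2 ^ 2) {x : R} (k : ℕ)
    (h : TR (EE w0 w1 w2 w3) x (k,0,0,k)) :
    TR (EE w0 w1 w2 w3) (qq ^ (3 * (k:ℤ)) • (p1 * x)) (k+1,0,1,k) := by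
  have low : ∀ b3 b2 b1 b0 : ℕ, tri (k,0,0,k) (b3,b2,b1,b0) →
      qq ^ (3 * (k:ℤ)) • qq ^ (1 - 2 * (b3:ℤ) - 2 * b2) • EE w0 w1 w2 w3 (b3,b2+2,b1,b0)
        ∈ QLat (EE w0 w1 w2 w3) 1 (k+1,0,1,k) := by
    rintro b3 b2 b1 b0 ⟨s, r, h1, h2, h3, h4⟩
    rw [smul_smul, ← zpow_add₀ qq_ne]
    refine QLat_basic ?_ ⟨s+1, r, ?_⟩ <;> push_cast at * <;> omega
  refine TR_op (TL (3 * (k:ℤ)) p1) h ?_ ?_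
  · rintro ⟨b3,b2,b1,b0⟩ hb
    rw [TL_ap, op_p1 H hp1, smul_sub]
    refine sub_mem ?_ (QLat_mono (by norm_num) (low _ _ _ _ hb))
    obtain ⟨s, r, h1, h2, h3, h4⟩ := hb
    rw [smul_smul, ← zpow_add₀ qq_ne]
    refine QLat_basic ?_ ⟨s, r, ?_⟩ <;> push_cast at * <;> omega
  · have := neg_mem (low _ _ _ _ (tri_refl (k,0,0,k)))
    rw [TL_ap, op_p1 H hp1, smul_sub, smul_smul, ← zpow_add₀ qq_ne]
    have e : 3 * (k:ℤ) + (-3 * (k:ℤ) - 2 * (0:ℕ) - (0:ℕ)) = 0 := by push_cast; ring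
    rwa [e, zpow_zero, one_smul, sub_sub_cancel_left]

theorem tr_p0 (H : QRel (qq ^ 2) w0 w1 w2 w3) (hp0 : p0 = w2 * w0 - qq ^ 2 • w1 ^ 2) {x : R} (m : ℕ)
    (h : TR (EE w0 w1 w2 w3) x (m+1,0,0,m)) :
    TR (EE w0 w1 w2 w3) (qq ^ (3 * (m:ℤ)) • (x * p0)) (m+1,1,0,m+1) := by
  have low : ∀ b3 b2 b1 b0 : ℕ, tri (m+1,0,0,m) (b3,b2,b1,b0) →
      qq ^ (3 * (m:ℤ)) • qq ^ (1 - 2 * (b0:ℤ) - 2 * b1) • EE w0 w1 w2 w3 (b3,b2,b1+2,b0)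
        ∈ QLat (EE w0 w1 w2 w3) 1 (m+1,1,0,m+1) := by
    rintro b3 b2 b1 b0 ⟨s, r, h1, h2, h3, h4⟩
    rw [smul_smul, ← zpow_add₀ qq_ne]
    refine QLat_basic ?_ ⟨s, r+1, ?_⟩ <;> push_cast at * <;> omega
  refine TR_op (TRt (3 * (m:ℤ)) p0) h ?_ ?_
  · rintro ⟨b3,b2,b1,b0⟩ hb
    rw [TRt_ap, op_p0 H hp0, smul_sub]
    refine sub_mem ?_ (QLat_mono (by norm_num) (low _ _ _ _ hb))
    obtain ⟨s, r, h1, h2, h3, h4⟩ := hb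
    rw [smul_smul, ← zpow_add₀ qq_ne]
    refine QLat_basic ?_ ⟨s, r, ?_⟩ <;> push_cast at * <;> omega
  · have := neg_mem (low _ _ _ _ (tri_refl (m+1,0,0,m)))
    rw [TRt_ap, op_p0 H hp0, smul_sub, smul_smul, ← zpow_add₀ qq_ne]
    have e : 3 * (m:ℤ) + (-3 * (m:ℤ) - 2 * (0:ℕ) - (0:ℕ)) = 0 := by push_cast; ring
    rwa [e, zpow_zero, one_smul, sub_sub_cancel_left]

variable {bar : F →+* F} {σ : R → R} {B : Idx → R} {z : R}

theorem SK_of (hσ : SH bar σ B (EE w0 w1 w2 w3)) (hs : SU σ w0 w1 w2 w3) (H : QRel (qq ^ 2) w0 w1 w2 w3)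
    (hp1 : p1 = w3 * w1 - qq ^ 2 • w2 ^ 2) (hp0 : p0 = w2 * w0 - qq ^ 2 • w1 ^ 2)
    (hz : z = w3 * w0 - qq ^ 2 • (w2 * w1)) : SK qq bar σ w0 w1 w2 w3 p1 p0 z := by
  refine ⟨qq_ne, hσ.hbar, hσ.add, hσ.mul, hσ.smul, hs.s0, hs.s1, hs.s2, hs.s3, H, ?_, hp1, hp0, hz⟩
  have h := hσ.eig (0,0,0,0)
  rw [B_eq_E hσ (Sset_empty (by intro s r; simp; omega))] at h
  have e : EE w0 w1 w2 w3 (0,0,0,0) = 1 := by simp [EE, bexp]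
  have eN : Nnum (0,0,0,0) = 0 := by simp [Nnum]
  rwa [e, eN, neg_zero, zpow_zero, one_smul] at h

theorem tr_main (h : SK qq bar σ w0 w1 w2 w3 p1 p0 z) (n : ℕ) :
    TR (EE w0 w1 w2 w3) (sS qq p1 p0 z n) (n,0,0,n) ∧
    TR (EE w0 w1 w2 w3) (xX qq w2 w3 p1 p0 z n) (n+1,0,0,n) := by
  induction n using Nat.strong_induction_on with
  | _ n ih =>
  have hs : TR (EE w0 w1 w2 w3) (sS qq p1 p0 z n) (n,0,0,n) := by
    match n, ih with
    | 0, _ =>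
      rw [sS_zero, TR]
      simp [EE, bexp]
    | 1, _ =>
      rw [sS_one, h.hz]
      apply TR_sub
      · rw [TR]
        simp [EE, bexp]
      · have e : EE w0 w1 w2 w3 (0,1,1,0) = w2 * w1 := by simp [EE, bexp]
        rw [← e]
        have := QLat_basic (E := EE w0 w1 w2 w3) (m := 1) (k := 2) (a := (1,0,0,1)) (b := (0,1,1,0)) (by norm_num)
          ⟨1, 1, by simp⟩
        exact_mod_cast this
    | m+2, ih =>
      rw [sS_rec h]
      apply TR_sub
      · exact_mod_cast tr_u0 (m+1) (ih (m+1) (by omega)).2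
      · exact tr_u1 h.H m (tr_p0 h.H h.hp0 m (ih m (by omega)).2)
  refine ⟨hs, ?_⟩
  match n, ih, hs with
  | 0, _, _ =>
    rw [xX_zero, TR]
    simp [EE, bexp]
  | k+1, ih, hs =>
    rw [xX_L h]
    apply TR_sub
    · exact_mod_cast tr_u3 (k+1) hs
    · apply tr_u2 h.H
      rw [wW_eq h]
      exact tr_p1 h.H h.hp1 k (ih k (by omega)).1

theorem B_eq (hσ : SH bar σ B E) {x : R} {a : Idx} (h : TR E x a) (he : σ x = qq ^ (-Nnum a) • x) : B a = x := by
  rw [← sub_eq_zero]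
  apply uniq hσ (a := a)
  · have := sub_mem (cond1_lat hσ a) h
    rwa [sub_sub_sub_cancel_right] at this
  · rw [sig_sub hσ, hσ.eig, he, smul_sub]

theorem final (hσ : SH bar σ B (EE w0 w1 w2 w3)) (h : SK qq bar σ w0 w1 w2 w3 p1 p0 z) :
    B (1,0,0,0) = w3 ∧ B (0,0,0,0) = 1 ∧ ∀ k : ℕ,
    B (k+2,0,0,k+1) = qq ^ ((k:ℤ) + 1) • (w3 * B (k+1,0,0,k+1)) - qq ^ (2 * (k:ℤ) + 3) • (w2 * B (k+1,0,1,k)) ∧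
    B (k+2,0,0,k+1) = qq ^ (3 * (k:ℤ) + 3) • (B (k+1,0,0,k+1) * w3) - qq ^ (2 * (k:ℤ) + 1) • (B (k+1,0,1,k) * w2) := by
  have hs : ∀ n, B (n,0,0,n) = sS qq p1 p0 z n := fun n => B_eq hσ (tr_main h n).1 (sS_eig h n)
  have hx : ∀ n, B (n+1,0,0,n) = xX qq w2 w3 p1 p0 z n := fun n => B_eq hσ (tr_main h n).2 (xX_eig h n)
  have hw : ∀ k, B (k+1,0,1,k) = wW qq p1 p0 z k := by
    intro k
    refine B_eq hσ ?_ (wW_eig h k)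
    rw [wW_eq h]
    exact tr_p1 h.H h.hp1 k (tr_main h k).1
  refine ⟨(hx 0).trans xX_zero, (hs 0).trans sS_zero, fun k => ?_⟩
  rw [hx (k+1), hs, hw]
  exact ⟨xX_L h k, xX_R h k⟩

end Tri

theorem der_aux {K R : Type*} [Field K] [Ring R] [Algebra K R] {c : K} (hc : c ≠ 0) (A v : R) (i : ℕ) :
    A * ((c⁻¹) ^ i • v) - ((c⁻¹) ^ i • v) * A = (c ^ 2) • ((c⁻¹) ^ (i + 2) • (A * v - v * A)) := by
  rw [mul_smul_comm, smul_mul_assoc, ← smul_sub, smul_smul]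
  congr 1
  rw [pow_add]
  field_simp

theorem qrel_U (h01 : u0 * u1 = (qq ^ 2)⁻¹ • (u1 * u0)) (h12 : u1 * u2 = (qq ^ 2)⁻¹ • (u2 * u1))
    (h23 : u2 * u3 = (qq ^ 2)⁻¹ • (u3 * u2)) : QRel (qq ^ 2) u0 u1 u2 u3 := by
  refine qrel_of_deriv (κ := (1 - (qq⁻¹) ^ 2) ^ 2) (A := Aelt) (pow_ne_zero 2 kap_ne) ?_ ?_ ?_ h01 h12 h23
  · have := der_aux kap_ne Aelt v0 0
    rw [pow_zero, one_smul] at this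
    exact this
  · exact der_aux kap_ne Aelt v1 2
  · exact der_aux kap_ne Aelt v2 4

theorem qrel_S (h01 : us0 * us1 = (qq ^ 2)⁻¹ • (us1 * us0)) (h12 : us1 * us2 = (qq ^ 2)⁻¹ • (us2 * us1))
    (h23 : us2 * us3 = (qq ^ 2)⁻¹ • (us3 * us2)) : QRel (qq ^ 2) us0 us1 us2 us3 := by
  have H := qrel_U (congrArg Subtype.val h01) (congrArg Subtype.val h12) (congrArg Subtype.val h23)
  exact ⟨h01, h12, h23, Subtype.ext H.h02, Subtype.ext H.h13, Subtype.ext H.h03⟩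

theorem SH_S {bar : F →+* F} {σ : Sgen → Sgen} {B : Idx → Sgen}
    (hPBW : LinearIndependent F mon) (hσ : SigmaHyp bar σ) (hB : DCB bar σ B) :
    SH bar σ B (EE us0 us1 us2 us3) := by
  obtain ⟨h1, h2, h3, h4, h5, h6⟩ := hσ
  refine ⟨h1, h3, h4, h5, fun a => (hB a).1, fun a => (hB a).2, ?_⟩
  exact hPBW.units_smul (fun b => Units.mk0 (qq ^ bexp b) (pow_ne_zero _ qq_ne))

theorem final_S {bar : F →+* F} {σ : Sgen → Sgen} {B : Idx → Sgen}
    (hPBW : LinearIndependent F mon) (hσ : SigmaHyp bar σ) (hB : DCB bar σ B) :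
    B (1,0,0,0) = us3 ∧ B (0,0,0,0) = 1 ∧ ∀ k : ℕ,
    B (k+2,0,0,k+1) = qq ^ ((k:ℤ) + 1) • (us3 * B (k+1,0,0,k+1)) - qq ^ (2 * (k:ℤ) + 3) • (us2 * B (k+1,0,1,k)) ∧
    B (k+2,0,0,k+1) = qq ^ (3 * (k:ℤ) + 3) • (B (k+1,0,0,k+1) * us3) - qq ^ (2 * (k:ℤ) + 1) • (B (k+1,0,1,k) * us2) := by
  have hS := SH_S hPBW hσ hB
  have hU : SU σ us0 us1 us2 us3 := ⟨hσ.2.2.2.2.2.1, hσ.2.2.2.2.2.2.1, hσ.2.2.2.2.2.2.2.1, hσ.2.2.2.2.2.2.2.2⟩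
  have H := qrel_S (rel01 hS hU) (rel12 hS hU) (rel23 hS hU)
  exact final hS (SK_of hS hU H rfl rfl rfl)

theorem Bz_nat (B : Idx → Sgen) (a b c d : ℕ) : Bz B ((a:ℤ), (b:ℤ), (c:ℤ), (d:ℤ)) = B (a,b,c,d) := by
  simp [Bz]

theorem aux_one {R : Type*} [Ring R] [Algebra F R] (w x : R) (k l : ℤ) (hk : k = 0) :
    w = qq ^ k • (w * 1) - qq ^ l • (x * 0) := by
  rw [hk, mul_one, mul_zero, smul_zero, sub_zero, zpow_zero, one_smul]

theorem aux_one' {R : Type*} [Ring R] [Algebra F R] (w x : R) (k l : ℤ) (hk : k = 0) :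
    w = qq ^ k • (1 * w) - qq ^ l • (0 * x) := by
  rw [hk, one_mul, zero_mul, smul_zero, sub_zero, zpow_zero, one_smul]

/-- For every `n ≥ 1` the dual canonical basis elements satisfy
`B[n,0,0,n−1] = q^{n−1} u₃ B[n−1,0,0,n−1] − q^{2n−1} u₂ B[n−1,0,1,n−2]`
`= q^{3n−3} B[n−1,0,0,n−1] u₃ − q^{2n−3} B[n−1,0,1,n−2] u₂`. -/
theorem stmt10 (bar : F →+* F) (σ : Sgen → Sgen) (B : Idx → Sgen)
    (hPBW : LinearIndependent F mon) (hσ : SigmaHyp bar σ) (hB : DCB bar σ B) (n : ℕ) (hn : 1 ≤ n) :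
    Bz B ((n : ℤ), 0, 0, (n : ℤ) - 1)
        = qq ^ ((n : ℤ) - 1) • (us3 * Bz B ((n : ℤ) - 1, 0, 0, (n : ℤ) - 1))
          - qq ^ (2 * (n : ℤ) - 1) • (us2 * Bz B ((n : ℤ) - 1, 0, 1, (n : ℤ) - 2)) ∧
    Bz B ((n : ℤ), 0, 0, (n : ℤ) - 1)
        = qq ^ (3 * (n : ℤ) - 3) • (Bz B ((n : ℤ) - 1, 0, 0, (n : ℤ) - 1) * us3)
          - qq ^ (2 * (n : ℤ) - 3) • (Bz B ((n : ℤ) - 1, 0, 1, (n : ℤ) - 2) * us2) := by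
  obtain ⟨f1, f2, f3⟩ := final_S hPBW hσ hB
  match n, hn with
  | 1, _ =>
    have e1 : Bz B (((1:ℕ):ℤ), 0, 0, ((1:ℕ):ℤ) - 1) = us3 := f1 ▸ Bz_nat B 1 0 0 0
    have e2 : Bz B (((1:ℕ):ℤ) - 1, 0, 0, ((1:ℕ):ℤ) - 1) = 1 := f2 ▸ Bz_nat B 0 0 0 0
    have e3 : Bz B (((1:ℕ):ℤ) - 1, 0, 1, ((1:ℕ):ℤ) - 2) = 0 := if_neg (by simp)
    have e4 : ((1:ℕ):ℤ) - 1 = 0 := by norm_num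
    have e5 : 3 * ((1:ℕ):ℤ) - 3 = 0 := by norm_num
    constructor
    · rw [e1, e2, e3]; exact aux_one us3 us2 _ _ e4
    · rw [e1, e2, e3]; exact aux_one' us3 us2 _ _ e5
  | k+2, _ =>
    have n1 : ((k+2:ℕ):ℤ) - 1 = ((k+1:ℕ):ℤ) := by push_cast; ring
    have n2 : ((k+2:ℕ):ℤ) - 2 = (k:ℤ) := by push_cast; ring
    have e1 : Bz B (((k+2:ℕ):ℤ), 0, 0, ((k+2:ℕ):ℤ) - 1) = B (k+2,0,0,k+1) := by
      rw [n1]; exact Bz_nat B (k+2) 0 0 (k+1)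
    have e2 : Bz B (((k+2:ℕ):ℤ) - 1, 0, 0, ((k+2:ℕ):ℤ) - 1) = B (k+1,0,0,k+1) := by
      rw [n1]; exact Bz_nat B (k+1) 0 0 (k+1)
    have e3 : Bz B (((k+2:ℕ):ℤ) - 1, 0, 1, ((k+2:ℕ):ℤ) - 2) = B (k+1,0,1,k) := by
      rw [n1, n2]; exact Bz_nat B (k+1) 0 1 k
    have m1 : 2 * ((k+2:ℕ):ℤ) - 1 = 2 * (k:ℤ) + 3 := by push_cast; ring
    have m2 : 3 * ((k+2:ℕ):ℤ) - 3 = 3 * (k:ℤ) + 3 := by push_cast; ring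
    have m3 : 2 * ((k+2:ℕ):ℤ) - 3 = 2 * (k:ℤ) + 1 := by push_cast; ring
    rw [e1, e2, e3, m1, m2, m3, n1]
    exact f3 k
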